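/- arXiv:1101.4821 — 2 statements merged into one kernel-verified Lean document; each statement's English description precedes it below -/
import Mathlib

section
/- Let g, n ≥ 0 and let Γ, Γ' be connected 3-regular graphs with b₁ = g and n labeled legs. Then there exists a finite sequence Γ = Γ₁, Γ₂, Γ₃, …, Γ₂ₕ₊₁ = Γ' of connected graphs with n labeled legs and b₁ = g, such that every odd-indexed graph Γ₂ᵢ₋₁ is 3-regular and, for every i, the even-indexed graph Γ₂ᵢ is obtained both from Γ₂ᵢ₋₁ and from Γ₂ᵢ₊₁ by contracting exactly one edge which is not a loop (and no leg is contracted). -/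
/-!
A graph is encoded by its endpoint map `ε : H → V`, on fixed sets of half-edges and vertices and a
fixed involution `ι`. A *flip* along a non-loop edge lets a half-edge at one end and a half-edge at the
other end exchange their endpoints. Both graphs then have the same contraction along this edge
(`Flip.contr`), and flips preserve connectedness and `3`-regularity (`Flip.good`), so it suffices
to join the two graphs by flips, up to isomorphism.

Equal `n`, equal `b₁` and `3`-regularity force equally many edges, hence half-edges and vertices, so the
two graphs may be taken to be two endpoint maps for the same `H`, `V` and `ι` (`exists_equiv`).

The heart of the proof is `rel_of_good`, an induction on the number of edges. When an edge of a graph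
is cut into two legs, every flip of the resulting graph is also a flip of the original one
(`Rel.of_cut`), so it is enough to cut a corresponding edge in both graphs and to keep them
connected.

* If there are two legs and more than one vertex, one leg can be moved by flips along a shortest path
  until it reaches the vertex of the other (`exists_cherry`). This is done in both graphs. The third
  half-edge at this vertex belongs to an edge leading elsewhere; after a relabelling it is the same one
  in both graphs. Cutting it splits off a vertex with three legs, and what remains is connected
  (`Good.prune`).
* If there is at most one leg, a count of half-edges shows that the graph is not a tree, so some edge
  lies outside a spanning tree (`exists_nonbridge`). After a relabelling the same edge can be cut in
  both graphs.

Because vertices are split off, the induction carries along the set `W` of vertices still in play,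
outside of which the two graphs agree.
-/

open scoped ENNReal NNReal Classical

/-- A combinatorial graph with `n` labeled legs: a finite nonempty set `V` of vertices, a
finite set `H` of half-edges, an involution `ι` on `H` whose fixed points are exactly the
`n` labeled legs, and an endpoint map `ε : H → V`.  Edges are the pairs `{h, ι h}` with
`ι h ≠ h`. -/
structure LeggedGraph (n : ℕ) where
  V : Type
  H : Type
  finV : Finite V
  finH : Finite H
  neV : Nonempty V
  ι : H → H
  ι_invol : ∀ h, ι (ι h) = h
  ε : H → V
  leg : Fin n → H
  leg_fix : ∀ i, ι (leg i) = leg i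
  leg_inj : Function.Injective leg
  fix_leg : ∀ h, ι h = h → ∃ i, leg i = h

attribute [instance] LeggedGraph.finV LeggedGraph.finH LeggedGraph.neV

namespace LeggedGraph

variable {n : ℕ}

/-- The type of edges of `G`: unordered pairs `{h, ι h}` with `ι h ≠ h`. -/
def Edge (G : LeggedGraph n) : Type :=
  Quot (fun h h' : {h : G.H // G.ι h ≠ h} => (h' : G.H) = G.ι (h : G.H))

/-- The edge determined by a non-fixed half-edge. -/
def edgeMk (G : LeggedGraph n) (h : G.H) (hne : G.ι h ≠ h) : G.Edge := Quot.mk _ ⟨h, hne⟩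

/-- The number of edges of `G`. -/
noncomputable def numEdges (G : LeggedGraph n) : ℕ := Nat.card G.Edge

/-- Two vertices are adjacent if they are the two endpoints of some edge. -/
def adjRel (G : LeggedGraph n) : G.V → G.V → Prop := fun v v' =>
  ∃ h, G.ι h ≠ h ∧ G.ε h = v ∧ G.ε (G.ι h) = v'

/-- The number of connected components of `G`. -/
noncomputable def numComps (G : LeggedGraph n) : ℕ := Nat.card (Quot G.adjRel)

/-- `G` is connected: any two vertices can be joined by an edge path. -/
def IsConnected (G : LeggedGraph n) : Prop := ∀ v v' : G.V, Relation.EqvGen G.adjRel v v'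

/-- The first Betti number `b₁(G) = |E(G)| − |V(G)| + c`, where `c` is the number of
connected components (stated as `|E(G)| + c − |V(G)|`, a natural number). -/
noncomputable def b1 (G : LeggedGraph n) : ℕ := G.numEdges + G.numComps - Nat.card G.V

/-- The valence of a vertex: the number of half-edges based at it (a loop counts twice,
legs count once). -/
noncomputable def valence (G : LeggedGraph n) (v : G.V) : ℕ := Nat.card {h : G.H // G.ε h = v}

/-- `G` is 3-regular if every vertex has valence `3`. -/
def ThreeRegular (G : LeggedGraph n) : Prop := ∀ v, G.valence v = 3

/-- The genus of the weighted graph `(G, w)`: `b₁(G) + Σ_v w(v)`. -/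
noncomputable def genus (G : LeggedGraph n) (w : G.V → ℕ) : ℕ := G.b1 + ∑ᶠ v, w v

/-- Stability of a weighted graph: every vertex of weight `0` has valence at least `3` and
every vertex of weight `1` has valence at least `1`. -/
def Stable (G : LeggedGraph n) (w : G.V → ℕ) : Prop :=
  ∀ v, (w v = 0 → 3 ≤ G.valence v) ∧ (w v = 1 → 1 ≤ G.valence v)

/-- The set of half-edges of the edges meeting a set `S` of half-edges: this is the
set of half-edges of the edge set determined by `S` (legs and fixed half-edges are
discarded, and the set is closed under the involution). -/
def sym (G : LeggedGraph n) (S : Set G.H) : Set G.H :=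
  {h | (h ∈ S ∨ G.ι h ∈ S) ∧ G.ι h ≠ h}

theorem sym_iota_mem {G : LeggedGraph n} {S : Set G.H} {h : G.H} (hh : h ∈ G.sym S) :
    G.ι h ∈ G.sym S := by
  obtain ⟨h1, h2⟩ := hh
  constructor
  · rcases h1 with h1 | h1
    · right; rwa [G.ι_invol]
    · left; exact h1
  · rw [G.ι_invol]
    exact fun e => h2 e.symm

theorem sym_iota_not_mem {G : LeggedGraph n} {S : Set G.H} {h : G.H} (hh : h ∉ G.sym S) :
    G.ι h ∉ G.sym S := fun hc => by
  have h2 := sym_iota_mem hc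
  rw [G.ι_invol] at h2
  exact hh h2

/-- The relation identifying the two endpoints of every edge in `S`. -/
def contrRel (G : LeggedGraph n) (S : Set G.H) : G.V → G.V → Prop := fun v v' =>
  ∃ h ∈ G.sym S, G.ε h = v ∧ G.ε (G.ι h) = v'

/-- The contraction `Γ/S` of the set of edges `S`: its vertices are the connected
components of the graph obtained by removing all edges not in `S`, its half-edges are the
half-edges not belonging to `S`, and legs are kept. -/
def contract (G : LeggedGraph n) (S : Set G.H) : LeggedGraph n where
  V := Quot (G.contrRel S)
  H := {h : G.H // h ∉ G.sym S}
  finV := inferInstance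
  finH := inferInstance
  neV := G.neV.map (Quot.mk _)
  ι := fun h => ⟨G.ι h.1, sym_iota_not_mem h.2⟩
  ι_invol := fun h => Subtype.ext (G.ι_invol h.1)
  ε := fun h => Quot.mk _ (G.ε h.1)
  leg := fun i => ⟨G.leg i, fun hc => hc.2 (G.leg_fix i)⟩
  leg_fix := fun i => Subtype.ext (G.leg_fix i)
  leg_inj := fun i j hij => G.leg_inj (congrArg Subtype.val hij)
  fix_leg := fun h hh => by
    obtain ⟨i, hi⟩ := G.fix_leg h.1 (congrArg Subtype.val hh)
    exact ⟨i, Subtype.ext hi⟩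

/-- The graph `Γ − T` obtained from `G` by keeping only the edges in `S` (and keeping all
vertices and all legs). -/
def restrict (G : LeggedGraph n) (S : Set G.H) : LeggedGraph n where
  V := G.V
  H := {h : G.H // h ∈ G.sym S ∨ ∃ i, G.leg i = h}
  finV := G.finV
  finH := inferInstance
  neV := G.neV
  ι := fun h => ⟨G.ι h.1, by
    rcases h.2 with hm | ⟨i, hi⟩
    · exact Or.inl (sym_iota_mem hm)
    · refine Or.inr ⟨i, ?_⟩
      rw [← hi]
      exact (G.leg_fix i).symm⟩
  ι_invol := fun h => Subtype.ext (G.ι_invol h.1)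
  ε := fun h => G.ε h.1
  leg := fun i => ⟨G.leg i, Or.inr ⟨i, rfl⟩⟩
  leg_fix := fun i => Subtype.ext (G.leg_fix i)
  leg_inj := fun i j hij => G.leg_inj (congrArg Subtype.val hij)
  fix_leg := fun h hh => by
    rcases h.2 with hm | ⟨i, hi⟩
    · exact absurd (congrArg Subtype.val hh) hm.2
    · exact ⟨i, Subtype.ext hi⟩

/-- The subgraph of `Γ − T` lying over a vertex `x` of the contraction `Γ/S`
(the fiber `σ⁻¹(x)` of the contraction map `σ`), viewed as a graph without legs. -/
def fiber (G : LeggedGraph n) (S : Set G.H) (x : Quot (G.contrRel S)) : LeggedGraph 0 where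
  V := {v : G.V // Quot.mk (G.contrRel S) v = x}
  H := {h : G.H // h ∈ G.sym S ∧ Quot.mk (G.contrRel S) (G.ε h) = x}
  finV := inferInstance
  finH := inferInstance
  neV := by
    obtain ⟨v, hv⟩ := Quot.exists_rep x
    exact ⟨⟨v, hv⟩⟩
  ι := fun h => ⟨G.ι h.1, sym_iota_mem h.2.1, by
    have h2 : Quot.mk (G.contrRel S) (G.ε h.1) = Quot.mk (G.contrRel S) (G.ε (G.ι h.1)) :=
      Quot.sound ⟨h.1, h.2.1, rfl, rfl⟩
    rw [← h2]
    exact h.2.2⟩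
  ι_invol := fun h => Subtype.ext (G.ι_invol h.1)
  ε := fun h => ⟨G.ε h.1, h.2.2⟩
  leg := Fin.elim0
  leg_fix := fun i => i.elim0
  leg_inj := fun i => i.elim0
  fix_leg := fun h hh => absurd (congrArg Subtype.val hh) h.2.1.2

/-- The weight function `w/S` of the weighted contraction of `(G, w)`:
`w/S(x) = b₁(σ⁻¹(x)) + Σ_{v ∈ σ⁻¹(x)} w(v)`. -/
noncomputable def wcontract (G : LeggedGraph n) (w : G.V → ℕ) (S : Set G.H) :
    (G.contract S).V → ℕ := fun x =>
  (G.fiber S x).b1 + ∑ᶠ v : {v : G.V // Quot.mk (G.contrRel S) v = x}, w v.1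

/-- Isomorphism of graphs with `n` labeled legs. -/
def GIso (G G' : LeggedGraph n) : Prop :=
  ∃ (fV : G.V ≃ G'.V) (fH : G.H ≃ G'.H),
    (∀ h, fH (G.ι h) = G'.ι (fH h)) ∧
    (∀ h, fV (G.ε h) = G'.ε (fH h)) ∧
    (∀ i, fH (G.leg i) = G'.leg i)

/-- Isomorphism of weighted graphs with `n` labeled legs. -/
def WIso (G : LeggedGraph n) (w : G.V → ℕ) (G' : LeggedGraph n) (w' : G'.V → ℕ) : Prop :=
  ∃ (fV : G.V ≃ G'.V) (fH : G.H ≃ G'.H),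
    (∀ h, fH (G.ι h) = G'.ι (fH h)) ∧
    (∀ h, fV (G.ε h) = G'.ε (fH h)) ∧
    (∀ i, fH (G.leg i) = G'.leg i) ∧
    (∀ v, w' (fV v) = w v)

/-- Isomorphism of metric weighted graphs with `n` labeled legs (lengths take values in
`ℝ≥0 ∪ {∞}`, realized as `ℝ≥0∞`). -/
def MIso (G : LeggedGraph n) (w : G.V → ℕ) (l : G.H → ℝ≥0∞)
    (G' : LeggedGraph n) (w' : G'.V → ℕ) (l' : G'.H → ℝ≥0∞) : Prop :=
  ∃ (fV : G.V ≃ G'.V) (fH : G.H ≃ G'.H),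
    (∀ h, fH (G.ι h) = G'.ι (fH h)) ∧
    (∀ h, fV (G.ε h) = G'.ε (fH h)) ∧
    (∀ i, fH (G.leg i) = G'.leg i) ∧
    (∀ v, w' (fV v) = w v) ∧
    (∀ h, l' (fH h) = l h)

/-- `G'` is obtained from `G` by contracting exactly one edge, which is not a loop. -/
def OneEdgeContr (G G' : LeggedGraph n) : Prop :=
  ∃ h₀ : G.H, G.ι h₀ ≠ h₀ ∧ G.ε (G.ι h₀) ≠ G.ε h₀ ∧ GIso (G.contract {h₀}) G'

/-- `(G', w')` is obtained from `(G, w)` by the weighted contraction of exactly one edge. -/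
def OneEdgeWContr (G : LeggedGraph n) (w : G.V → ℕ) (G' : LeggedGraph n)
    (w' : G'.V → ℕ) : Prop :=
  ∃ h₀ : G.H, G.ι h₀ ≠ h₀ ∧ WIso (G.contract {h₀}) (G.wcontract w {h₀}) G' w'

/-- The set of half-edges of the edges given length `0` by a point `p` of the cone. -/
def zeroSet (G : LeggedGraph n) (p : G.Edge → ℝ≥0∞) : Set G.H :=
  {h | ∃ hne : G.ι h ≠ h, p (G.edgeMk h hne) = 0}

/-- The length function of the metric weighted graph associated to a point `p` of the
cone: each surviving edge `e` gets length `p e`, and each leg gets length `∞`. -/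
noncomputable def assocLen (G : LeggedGraph n) (p : G.Edge → ℝ≥0∞)
    (h : {h : G.H // h ∉ G.sym (G.zeroSet p)}) : ℝ≥0∞ :=
  if hne : G.ι h.1 = h.1 then ⊤ else p (G.edgeMk h.1 hne)

/-- `p ∼ q`: the metric weighted graphs associated to the points `p` and `q` are
isomorphic. -/
def ptRel (G : LeggedGraph n) (w : G.V → ℕ) (p q : G.Edge → ℝ≥0∞) : Prop :=
  MIso (G.contract (G.zeroSet p)) (G.wcontract w (G.zeroSet p)) (G.assocLen p)
       (G.contract (G.zeroSet q)) (G.wcontract w (G.zeroSet q)) (G.assocLen q)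

/-- The equivalence on the closed cone `ℝ≥0^E`. -/
def ptRelNN (G : LeggedGraph n) (w : G.V → ℕ) (p q : G.Edge → ℝ≥0) : Prop :=
  G.ptRel w (fun e => (p e : ℝ≥0∞)) (fun e => (q e : ℝ≥0∞))

end LeggedGraph

open LeggedGraph

namespace FlipConn

/-- Every vertex has exactly three half-edges. -/
def Reg {H V : Type} (ε : H → V) : Prop := ∀ v, {x | ε x = v}.ncard = 3

/-- Adjacency of vertices through an edge `{h, ι h}`; a loop makes its vertex adjacent to itself. -/
def Adj {H V : Type} (ι : H → H) (ε : H → V) : V → V → Prop := fun u v =>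
  ∃ h, ι h ≠ h ∧ ε h = u ∧ ε (ι h) = v

/-- Any two vertices of `W` are joined by a path of edges. The path may leave `W`, which does not
happen when all edges lie in `W`, as in `Good`. -/
def Conn {H V : Type} (ι : H → H) (W : Set V) (ε : H → V) : Prop :=
  ∀ u ∈ W, ∀ v ∈ W, Relation.EqvGen (Adj ι ε) u v

/-- A `3`-regular graph all of whose edges lie in the connected part `W`; the vertices outside `W`
carry legs only. -/
structure Good {H V : Type} (ι : H → H) (W : Set V) (ε : H → V) : Prop where
  reg : Reg ε
  mem : ∀ x, ι x ≠ x → ε x ∈ W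
  conn : Conn ι W ε

/-- The half-edges with an endpoint outside of `W` in one of the two graphs have the same endpoint in
both. -/
def Agree {H V : Type} (W : Set V) (ε δ : H → V) : Prop :=
  ∀ x, (ε x ∉ W ∨ δ x ∉ W) → ε x = δ x

/-- The elementary move along the non-loop edge `{h, ι h}`: a half-edge `b` at one end and a
half-edge `c` at the other end exchange their endpoints. Neither of them is a side of the edge, so
that both graphs have the same contraction along it. -/
def Flip {H V : Type} (ι : H → H) (ε ε₁ : H → V) : Prop :=
  ∃ h b c, ι h ≠ h ∧ b ≠ h ∧ c ≠ ι h ∧ ε b = ε h ∧ ε c = ε (ι h) ∧ ε h ≠ ε (ι h) ∧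
    ε₁ = ε ∘ Equiv.swap b c

/-- Automorphisms of the half-edge set respecting edges and fixing each leg. -/
def Aut {H : Type} (ι : H → H) (τ : Equiv.Perm H) : Prop :=
  (∀ x, τ (ι x) = ι (τ x)) ∧ ∀ x, ι x = x → τ x = x

/-- The graph `ε` can be flipped to a relabelling of `ε'`. -/
def Rel {H V : Type} (ι : H → H) (ε ε' : H → V) : Prop :=
  ∃ (σ : Equiv.Perm V) (τ : Equiv.Perm H), Aut ι τ ∧
    Relation.ReflTransGen (Flip ι) ε (σ ∘ ε' ∘ τ)

/-- Cut the edge `{h, ι h}` into two legs. -/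
noncomputable def cut {H : Type} (ι : H → H) (h : H) : H → H :=
  fun x => if x = h ∨ x = ι h then x else ι x

section basics

variable {H V : Type} {ι : H → H} {ε ε' ε₁ : H → V} {W : Set V}

theorem Aut.one : Aut ι 1 := ⟨fun _ => rfl, fun _ _ => rfl⟩

theorem Aut.mul {τ τ' : Equiv.Perm H} (h : Aut ι τ) (h' : Aut ι τ') : Aut ι (τ * τ') :=
  ⟨fun x => by simp [h.1, h'.1], fun x hx => by simp [h.2 x hx, h'.2 x hx]⟩

theorem Aut.inv {τ : Equiv.Perm H} (h : Aut ι τ) : Aut ι τ⁻¹ :=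
  ⟨fun x => by rw [Equiv.Perm.inv_eq_iff_eq, h.1]; simp,
    fun x hx => by rw [Equiv.Perm.inv_eq_iff_eq, h.2 x hx]⟩

theorem Flip.symm (hι : ∀ x, ι (ι x) = x) (h : Flip ι ε ε₁) : Flip ι ε₁ ε := by
  obtain ⟨h, b, c, h1, h2, h3, h4, h5, h6, rfl⟩ := h
  have hb : b ≠ ι h := fun e => h6 (by rw [← h4, e])
  have hc : c ≠ h := fun e => h6 (by rw [← h5, e])
  refine ⟨ι h, b, c, by rw [hι]; exact h1.symm, hb, by rwa [hι], ?_, ?_, ?_, ?_⟩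
  · simp [Equiv.swap_apply_of_ne_of_ne hb.symm h3.symm, h5]
  · simp [hι, Equiv.swap_apply_of_ne_of_ne h2.symm hc.symm, h4]
  · simp only [hι, Function.comp_apply, Equiv.swap_apply_of_ne_of_ne h2.symm hc.symm,
      Equiv.swap_apply_of_ne_of_ne hb.symm h3.symm]
    exact h6.symm
  · ext x; simp

theorem Flip.relabel (σ : Equiv.Perm V) {τ : Equiv.Perm H} (hτ : Aut ι τ) (h : Flip ι ε ε₁) :
    Flip ι (σ ∘ ε ∘ τ) (σ ∘ ε₁ ∘ τ) := by
  obtain ⟨h, b, c, h1, h2, h3, h4, h5, h6, rfl⟩ := h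
  have hi := hτ.inv.1
  refine ⟨τ⁻¹ h, τ⁻¹ b, τ⁻¹ c, ?_, ?_, ?_, ?_, ?_, ?_, ?_⟩
  · rw [← hi]; exact fun e => h1 (τ⁻¹.injective e)
  · exact fun e => h2 (τ⁻¹.injective e)
  · rw [← hi]; exact fun e => h3 (τ⁻¹.injective e)
  · simp [h4]
  · simp [hτ.1, h5]
  · simpa [hτ.1] using h6
  · ext x
    simp only [Function.comp_apply]
    congr 2
    rw [Equiv.swap_apply_apply]
    simp

theorem reach_symm (hι : ∀ x, ι (ι x) = x) (h : Relation.ReflTransGen (Flip ι) ε ε') :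
    Relation.ReflTransGen (Flip ι) ε' ε := by
  induction h with
  | refl => exact .refl
  | tail _ h ih => exact .head (h.symm hι) ih

theorem reach_relabel (σ : Equiv.Perm V) {τ : Equiv.Perm H} (hτ : Aut ι τ)
    (h : Relation.ReflTransGen (Flip ι) ε ε') :
    Relation.ReflTransGen (Flip ι) (σ ∘ ε ∘ τ) (σ ∘ ε' ∘ τ) := by
  induction h with
  | refl => exact .refl
  | tail _ h ih => exact ih.tail (h.relabel σ hτ)

theorem Rel.trans {ε'' : H → V} (h : Rel ι ε ε') (h' : Rel ι ε' ε'') : Rel ι ε ε'' := by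
  obtain ⟨σ, τ, hτ, h⟩ := h
  obtain ⟨σ', τ', hτ', h'⟩ := h'
  exact ⟨σ * σ', τ' * τ, hτ'.mul hτ, h.trans (reach_relabel σ hτ h')⟩

theorem Rel.of_reach (h : Relation.ReflTransGen (Flip ι) ε ε') : Rel ι ε ε' :=
  ⟨1, 1, Aut.one, h⟩

theorem Rel.of_relabel (σ : Equiv.Perm V) {τ : Equiv.Perm H} (hτ : Aut ι τ) :
    Rel ι (σ ∘ ε ∘ τ) ε := ⟨σ, τ, hτ, .refl⟩

/-! ### Cutting an edge -/

theorem cut_invol (hι : ∀ x, ι (ι x) = x) (h : H) (x : H) : cut ι h (cut ι h x) = x := by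
  by_cases hx : x = h ∨ x = ι h
  · simp [cut, hx]
  · have : ¬ (ι x = h ∨ ι x = ι h) := by
      rintro (e | e)
      · exact hx (.inr (by rw [← e, hι]))
      · exact hx (.inl (by rw [← hι x, e, hι]))
    simp only [cut, hx, this, if_false, hι]

theorem cut_ne {h x : H} : cut ι h x ≠ x ↔ x ≠ h ∧ x ≠ ι h ∧ ι x ≠ x := by
  unfold cut
  split_ifs with hx
  · simp; tauto
  · tauto

theorem cut_eq {h x : H} (hx : cut ι h x ≠ x) : cut ι h x = ι x := by
  rw [cut_ne] at hx
  simp [cut, hx.1, hx.2.1]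

theorem Aut.of_cut (hι : ∀ x, ι (ι x) = x) {h : H} {τ : Equiv.Perm H} (hτ : Aut (cut ι h) τ) :
    Aut ι τ := by
  have hh : τ h = h := hτ.2 h (by simp [cut])
  have hh' : τ (ι h) = ι h := hτ.2 _ (by simp [cut])
  constructor
  · intro x
    by_cases h1 : x = h
    · subst h1; rw [hh, hh']
    by_cases h2 : x = ι h
    · subst h2; rw [hι, hh, hh', hι]
    have h3 : τ x ≠ h := fun e => h1 (τ.injective (e.trans hh.symm))
    have h4 : τ x ≠ ι h := fun e => h2 (τ.injective (e.trans hh'.symm))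
    have := hτ.1 x
    simpa [cut, h1, h2, h3, h4] using this
  · intro x hx
    refine hτ.2 x ?_
    by_contra hc
    exact (cut_ne.1 hc).2.2 hx

theorem Flip.of_cut {h : H} (hf : Flip (cut ι h) ε ε₁) : Flip ι ε ε₁ := by
  obtain ⟨k, b, c, h1, h2, h3, h4, h5, h6, rfl⟩ := hf
  rw [cut_eq h1] at *
  exact ⟨k, b, c, h1, h2, h3, h4, h5, h6, rfl⟩

/-- Flips of the cut graph are flips of the original graph: the key to all inductions. -/
theorem Rel.of_cut (hι : ∀ x, ι (ι x) = x) {h : H} (hr : Rel (cut ι h) ε ε') : Rel ι ε ε' := by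
  obtain ⟨σ, τ, hτ, hr⟩ := hr
  exact ⟨σ, τ, hτ.of_cut hι, hr.lift id fun _ _ => Flip.of_cut⟩

theorem cut_ncard_lt [Finite H] {h : H} (hh : ι h ≠ h) :
    {x | cut ι h x ≠ x}.ncard < {x | ι x ≠ x}.ncard := by
  apply Set.ncard_lt_ncard _ (Set.toFinite _)
  refine ⟨fun x hx => (cut_ne.1 hx).2.2, fun hs => ?_⟩
  exact (cut_ne.1 (hs hh)).1 rfl

/-! ### Relabelling -/

/-- Any half-edge of an edge can be carried to any other one by exchanging the two edges, or the two
sides of one edge. -/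
theorem exists_aut (hι : ∀ x, ι (ι x) = x) {h h' : H} (hh : ι h ≠ h) (hh' : ι h' ≠ h') :
    ∃ τ : Equiv.Perm H, Aut ι τ ∧ τ h = h' := by
  by_cases e1 : h' = h
  · exact ⟨1, Aut.one, e1.symm⟩
  by_cases e2 : h' = ι h
  · refine ⟨Equiv.swap h (ι h), ⟨fun x => ?_, fun x hx => ?_⟩, by simp [e2]⟩
    · by_cases x1 : x = h
      · subst x1; simp [hι]
      by_cases x2 : x = ι h
      · subst x2; simp [hι]
      rw [Equiv.swap_apply_of_ne_of_ne x1 x2, Equiv.swap_apply_of_ne_of_ne]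
      · exact fun e => x2 (by rw [← e, hι])
      · exact fun e => x1 (by rw [← hι x, e, hι])
    · rw [Equiv.swap_apply_of_ne_of_ne]
      · rintro rfl; exact hh hx
      · rintro rfl; exact hh (by rw [hι] at hx; exact hx.symm)
  have e3 : ι h' ≠ h := fun e => e2 (by rw [← e, hι])
  have e4 : ι h' ≠ ι h := fun e => e1 (by rw [← hι h', e, hι])
  refine ⟨Equiv.swap h h' * Equiv.swap (ι h) (ι h'), ⟨fun x => ?_, fun x hx => ?_⟩, ?_⟩
  · simp only [Equiv.Perm.mul_apply, Equiv.swap_apply_def]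
    have := hι x
    have := hι h
    have := hι h'
    grind
  · simp only [Equiv.Perm.mul_apply, Equiv.swap_apply_def]
    have := hι h
    have := hι h'
    grind
  · simp only [Equiv.Perm.mul_apply, Equiv.swap_apply_def]
    grind

theorem Reg.relabel (h : Reg ε) (σ : Equiv.Perm V) (τ : Equiv.Perm H) : Reg (σ ∘ ε ∘ τ) := by
  intro v
  rw [← h (σ⁻¹ v), ← Set.ncard_image_of_injective _ τ.injective]
  congr 1
  ext x
  simp only [Set.mem_image, Set.mem_ofPred_eq, Function.comp_apply]
  constructor
  · rintro ⟨y, rfl, rfl⟩; simp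
  · intro hx; exact ⟨τ⁻¹ x, by simp [hx], by simp⟩

theorem eqvGen_map {X Y : Type} {r : X → X → Prop} {s : Y → Y → Prop} {f : X → Y}
    (hf : ∀ x y, r x y → Relation.EqvGen s (f x) (f y)) {x y : X} (h : Relation.EqvGen r x y) :
    Relation.EqvGen s (f x) (f y) := by
  induction h with
  | rel x y h => exact hf x y h
  | refl x => exact .refl _
  | symm x y _ ih => exact ih.symm
  | trans x y z _ _ ih ih' => exact ih.trans _ _ _ ih'

theorem Conn.relabel {ι' : H → H} (hc : Conn ι W ε) {σ : Equiv.Perm V} {τ : Equiv.Perm H}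
    (hσ : ∀ v, v ∉ W → σ v = v) (hτ : ∀ x, τ (ι' x) = ι (τ x)) : Conn ι' W (σ ∘ ε ∘ τ) := by
  have hW : ∀ v ∈ W, σ⁻¹ v ∈ W := by
    intro v hv
    by_contra hn
    have := hσ _ hn
    simp at this
    exact hn (this ▸ hv)
  intro u hu v hv
  have := eqvGen_map (f := σ) (s := Adj ι' (σ ∘ ε ∘ τ)) ?_ (hc _ (hW u hu) _ (hW v hv))
  · simpa using this
  · rintro x y ⟨h, h1, rfl, rfl⟩
    refine .rel _ _ ⟨τ⁻¹ h, fun e => h1 ?_, by simp, by simp [hτ]⟩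
    have := congrArg τ e
    simpa [hτ] using this

theorem mem_of_perm {σ : Equiv.Perm V} (hσ : ∀ v, v ∉ W → σ v = v) {v : V} : σ v ∈ W ↔ v ∈ W := by
  constructor
  · intro h; by_contra hn; rw [hσ v hn] at h; exact hn h
  · intro h; by_contra hn
    have := σ.injective (hσ _ hn)
    exact hn (this.symm ▸ h)

theorem Aut.ne {τ : Equiv.Perm H} (hτ : Aut ι τ) {x : H} (hx : ι x ≠ x) : ι (τ x) ≠ τ x := by
  rw [← hτ.1]; exact fun e => hx (τ.injective e)

theorem Good.relabel (hg : Good ι W ε) {σ : Equiv.Perm V} {τ : Equiv.Perm H}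
    (hσ : ∀ v, v ∉ W → σ v = v) (hτ : Aut ι τ) : Good ι W (σ ∘ ε ∘ τ) where
  reg := hg.reg.relabel σ τ
  mem _ hx := (mem_of_perm hσ).2 (hg.mem _ (hτ.ne hx))
  conn := hg.conn.relabel hσ hτ.1

theorem Agree.relabel (ha : Agree W ε ε') (hg : Good ι W ε) (hg' : Good ι W ε')
    {σ : Equiv.Perm V} {τ : Equiv.Perm H}
    (hσ : ∀ v, v ∉ W → σ v = v) (hτ : Aut ι τ) : Agree W ε (σ ∘ ε' ∘ τ) := by
  intro x hx
  by_cases hl : ι x = x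
  · simp only [Function.comp_apply, hτ.2 x hl, mem_of_perm hσ] at hx ⊢
    have h1 := ha x hx
    rw [hσ, h1]
    rcases hx with hx | hx
    · rwa [← h1]
    · exact hx
  · exfalso
    simp only [Function.comp_apply, mem_of_perm hσ] at hx
    have := hg.mem x hl
    have := hg'.mem _ (hτ.ne hl)
    tauto

/-! ### Invariants of a flip -/

/-- A flip preserves `3`-regularity and connectedness, since the ends of the flipped edge stay
adjacent, and does not affect the vertices outside of `W`. -/
theorem Flip.good (hι : ∀ x, ι (ι x) = x) (hg : Good ι W ε) (hf : Flip ι ε ε₁) :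
    Good ι W ε₁ ∧ Agree W ε ε₁ := by
  obtain ⟨h, b, c, h1, h2, h3, h4, h5, h6, rfl⟩ := hf
  have hb : b ≠ ι h := fun e => h6 (by rw [← h4, e])
  have hc : c ≠ h := fun e => h6 (by rw [← h5, e])
  have hu := hg.mem h h1
  have hv := hg.mem (ι h) (by rw [hι]; exact h1.symm)
  have key : ∀ x, ε x = (ε ∘ Equiv.swap b c) x ∨ (ε x ∈ W ∧ (ε ∘ Equiv.swap b c) x ∈ W ∧
      Relation.EqvGen (Adj ι (ε ∘ Equiv.swap b c)) (ε x) ((ε ∘ Equiv.swap b c) x)) := by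
    have huv : Relation.EqvGen (Adj ι (ε ∘ Equiv.swap b c)) (ε h) (ε (ι h)) :=
      .rel _ _ ⟨h, h1, by simp [Equiv.swap_apply_of_ne_of_ne h2.symm hc.symm],
        by simp [Equiv.swap_apply_of_ne_of_ne hb.symm h3.symm]⟩
    intro x
    by_cases x1 : x = b
    · subst x1; right; simp only [Function.comp_apply, Equiv.swap_apply_left, h4, h5]
      exact ⟨hu, hv, huv⟩
    by_cases x2 : x = c
    · subst x2; right; simp only [Function.comp_apply, Equiv.swap_apply_right, h4, h5]
      exact ⟨hv, hu, huv.symm⟩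
    left; simp [Equiv.swap_apply_of_ne_of_ne x1 x2]
  refine ⟨⟨hg.reg.relabel 1 _, fun x hx => ?_, fun u hu v hv => ?_⟩, fun x hx => ?_⟩
  · rcases key x with k | k
    · rw [← k]; exact hg.mem x hx
    · exact k.2.1
  · refine eqvGen_map (f := id) ?_ (hg.conn u hu v hv)
    rintro _ _ ⟨l, l1, rfl, rfl⟩
    have kk : ∀ x, Relation.EqvGen (Adj ι (ε ∘ Equiv.swap b c)) (ε x)
        ((ε ∘ Equiv.swap b c) x) := fun x => by
      rcases key x with k | k
      · rw [← k]; exact .refl _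
      · exact k.2.2
    exact (kk l).trans _ _ _ (.trans _ _ _ (.rel _ _ ⟨l, l1, rfl, rfl⟩) (kk (ι l)).symm)
  · rcases key x with k | k
    · exact k
    · tauto

theorem Agree.trans {ε'' : H → V} (h : Agree W ε ε') (h' : Agree W ε' ε'') : Agree W ε ε'' := by
  intro x hx
  have a := h x
  have b := h' x
  grind

theorem Agree.symm (h : Agree W ε ε') : Agree W ε' ε := fun x hx => (h x hx.symm).symm

theorem Agree.refl : Agree W ε ε := fun _ _ => rfl

theorem reach_good (hι : ∀ x, ι (ι x) = x) (hg : Good ι W ε)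
    (hf : Relation.ReflTransGen (Flip ι) ε ε₁) : Good ι W ε₁ ∧ Agree W ε ε₁ := by
  induction hf with
  | refl => exact ⟨hg, .refl⟩
  | tail _ h ih =>
    have := h.good hι ih.1
    exact ⟨this.1, ih.2.trans this.2⟩

/-! ### Bringing two legs together -/

/-- `Near ι ε w j x`: the vertex `x` is at distance at most `j` from `w`. -/
def Near (ι : H → H) (ε : H → V) (w : V) : ℕ → V → Prop
  | 0, x => x = w
  | j + 1, x => Near ι ε w j x ∨ ∃ l, ε l = x ∧ Near ι ε w j (ε (ι l))

theorem Near.mono {w x : V} {i j : ℕ} (hij : i ≤ j) (h : Near ι ε w i x) : Near ι ε w j x := by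
  induction hij with
  | refl => exact h
  | step _ ih => exact .inl ih

theorem exists_near (hι : ∀ x, ι (ι x) = x) {w x : V} (h : Relation.EqvGen (Adj ι ε) x w) :
    ∃ j, Near ι ε w j x := by
  have : ∀ {x y}, Relation.EqvGen (Adj ι ε) x y →
      ((∃ j, Near ι ε w j x) ↔ (∃ j, Near ι ε w j y)) := by
    intro x y h
    induction h with
    | rel x y h =>
      obtain ⟨l, _, rfl, rfl⟩ := h
      constructor
      · rintro ⟨j, hj⟩; exact ⟨j + 1, .inr ⟨ι l, rfl, by rwa [hι]⟩⟩
      · rintro ⟨j, hj⟩; exact ⟨j + 1, .inr ⟨l, rfl, hj⟩⟩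
    | refl x => rfl
    | symm x y _ ih => exact ih.symm
    | trans x y z _ _ ih ih' => exact ih.trans ih'
  exact (this h).2 ⟨0, rfl⟩

theorem Reg.exists_third [Finite H] (hr : Reg ε) (v : V) (p q : H) :
    ∃ c, ε c = v ∧ c ≠ p ∧ c ≠ q := by
  have h2 : ({p, q} : Set H).ncard ≤ 2 := Set.ncard_insert_le p {q} |>.trans (by simp)
  obtain ⟨c, hc, hn⟩ := Set.exists_mem_notMem_of_ncard_lt_ncard
    (s := {p, q}) (t := {x | ε x = v}) (by rw [hr v]; omega) (Set.toFinite _)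
  simp only [Set.mem_insert_iff, Set.mem_singleton_iff, not_or] at hn
  exact ⟨c, hc, hn⟩

/-- Two legs can be brought to the same vertex. The leg `a` is moved along a shortest path towards
`b`, and each flip shortens this path by one edge. -/
theorem exists_cherry [Finite H] (hι : ∀ x, ι (ι x) = x) {a b : H} (hab : a ≠ b) (ha : ι a = a)
    (j : ℕ) : ∀ ε : H → V, Reg ε → Near ι ε (ε b) j (ε a) →
      ∃ ε₁, Relation.ReflTransGen (Flip ι) ε ε₁ ∧ ε₁ a = ε₁ b := by
  induction j with
  | zero => exact fun ε _ h => ⟨ε, .refl, h⟩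
  | succ j ih =>
    intro ε hr hn
    by_cases hn' : Near ι ε (ε b) j (ε a)
    · exact ih ε hr hn'
    obtain ⟨h, hh, hv⟩ := hn.resolve_left hn'
    have hne : ι h ≠ h := fun e => hn' (by rwa [e, hh] at hv)
    have huv : ε h ≠ ε (ι h) := fun e => hn' (by rwa [← e, hh] at hv)
    have hmin : ∀ i < j, ¬ Near ι ε (ε b) i (ε (ι h)) := fun i hi hi' =>
      hn' (Near.mono (i := i + 1) hi (.inr ⟨h, hh, hi'⟩))
    -- `k` is the half-edge through which the path leaves `ε (ι h)`, or `b` at its end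
    obtain ⟨k, hk, hkj⟩ : ∃ k, ε k = ε (ι h) ∧
        (j = 0 ∧ k = b ∨ ∃ i, j = i + 1 ∧ Near ι ε (ε b) i (ε (ι k))) := by
      cases j with
      | zero => exact ⟨b, hv.symm, .inl ⟨rfl, rfl⟩⟩
      | succ i =>
        obtain ⟨k, hk, hk'⟩ := hv.resolve_left (hmin i (by omega))
        exact ⟨k, hk, .inr ⟨i, rfl, hk'⟩⟩
    obtain ⟨c, hc, hc1, hc2⟩ := hr.exists_third (ε (ι h)) (ι h) k
    have hah : a ≠ h := fun e => hne (e ▸ ha)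
    have hac : a ≠ c := fun e => huv (by rw [hh, e, hc])
    have hflip : Flip ι ε (ε ∘ Equiv.swap a c) :=
      ⟨h, a, c, hne, hah, hc1, hh.symm, hc, huv, rfl⟩
    have hsame : ∀ x, x ≠ a → x ≠ c → (ε ∘ Equiv.swap a c) x = ε x := fun x x1 x2 => by
      simp [Equiv.swap_apply_of_ne_of_ne x1 x2]
    have hbc : b ≠ c := by
      rcases hkj with ⟨_, rfl⟩ | ⟨i, rfl, _⟩
      · exact hc2.symm
      · rintro rfl; exact hmin 0 (by omega) hc.symm
    have hb1 := hsame b hab.symm hbc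
    have hια : ∀ l, ι l = a → l = a := fun l hl => by rw [← hι l, hl, ha]
    have hnear : ∀ i < j, ∀ x, Near ι ε (ε b) i x →
        Near ι (ε ∘ Equiv.swap a c) (ε b) i x := by
      intro i
      induction i with
      | zero => exact fun _ x hx => hx
      | succ i ihi =>
        intro hi x hx
        by_cases hxi : Near ι ε (ε b) i x
        · exact .inl (ihi (by omega) x hxi)
        obtain ⟨l, rfl, hl⟩ := hx.resolve_left hxi
        have l1 : l ≠ a := fun e => hxi (by rw [e] at hl ⊢; rwa [ha] at hl)
        have l2 : l ≠ c := fun e => hmin _ hi (by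
          rw [← hc, ← e]; exact .inr ⟨l, rfl, hl⟩)
        have l3 : ι l ≠ c := fun e => hmin i (by omega) (by rwa [e, hc] at hl)
        refine .inr ⟨l, hsame l l1 l2, ?_⟩
        rw [hsame (ι l) (fun e => l1 (hια l e)) l3]
        exact ihi (by omega) _ hl
    obtain ⟨ε₁, h1, h2⟩ := ih (ε ∘ Equiv.swap a c) (hr.relabel 1 _) (by
      rw [hb1]
      simp only [Function.comp_apply, Equiv.swap_apply_left, hc]
      rcases hkj with ⟨rfl, rfl⟩ | ⟨i, rfl, hki⟩
      · exact hk.symm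
      · have k1 : k ≠ a := fun e => huv (by rw [hh, ← e, hk])
        have k3 : ι k ≠ c := fun e => hmin i (by omega) (by rwa [e, hc] at hki)
        refine .inr ⟨k, (hsame k k1 hc2.symm).trans hk, ?_⟩
        have := hsame (ι k) (fun e => k1 (hια k e)) k3
        rw [this]
        exact hnear i (by omega) _ hki)
    exact ⟨ε₁, .head hflip h1, h2⟩

/-! ### Edges that are not bridges -/

/-- The simple graph on `W` underlying a multigraph. -/
def simple (ι : H → H) (hι : ∀ x, ι (ι x) = x) (W : Set V) (ε : H → V) : SimpleGraph W where
  Adj u v := u ≠ v ∧ Adj ι ε u v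
  symm := ⟨by
    rintro u v ⟨h, l, l1, l2, l3⟩
    exact ⟨h.symm, ι l, by rw [hι]; exact l1.symm, l3, by rw [hι, l2]⟩⟩
  loopless := ⟨fun u h => h.1 rfl⟩

theorem simple_connected (hι : ∀ x, ι (ι x) = x) (hne : W.Nonempty)
    (hm : ∀ x, ι x ≠ x → ε x ∈ W) (hc : Conn ι W ε) : (simple ι hι W ε).Connected := by
  obtain ⟨w, hw⟩ := hne
  have : Nonempty W := ⟨⟨w, hw⟩⟩
  refine ⟨fun u v => ?_⟩
  let f : V → W := fun x => if hx : x ∈ W then ⟨x, hx⟩ else ⟨w, hw⟩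
  have hf : ∀ (x : V) (hx : x ∈ W), f x = ⟨x, hx⟩ := fun x hx => by simp [f, hx]
  have key := eqvGen_map (f := f) (s := (simple ι hι W ε).Reachable) ?_ (hc u u.2 v v.2)
  · rw [Equivalence.eqvGen_iff
      (SimpleGraph.reachable_is_equivalence _)] at key
    rwa [hf _ u.2, hf _ v.2] at key
  · rintro _ _ ⟨l, l1, rfl, rfl⟩
    have m1 := hm l l1
    have m2 := hm (ι l) (by rw [hι]; exact l1.symm)
    refine .rel _ _ ?_
    rw [hf _ m1, hf _ m2]
    by_cases he : ε l = ε (ι l)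
    · have : (⟨ε l, m1⟩ : W) = ⟨ε (ι l), m2⟩ := Subtype.ext he
      rw [this]
    · exact SimpleGraph.Adj.reachable ⟨fun h => he (congrArg Subtype.val h), l, l1, rfl, rfl⟩

/-- A connected graph has at least as many edges as a tree. Edges are counted by their sides. -/
theorem card_le [Finite H] [Finite V] (hι : ∀ x, ι (ι x) = x) (hne : W.Nonempty)
    (hm : ∀ x, ι x ≠ x → ε x ∈ W) (hc : Conn ι W ε) :
    2 * W.ncard ≤ {x | ι x ≠ x}.ncard + 2 := by
  have hconn := simple_connected hι hne hm hc
  have := Fintype.ofFinite W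
  have h1 := hconn.card_vert_le_card_edgeSet_add_one
  have h2 := (simple ι hι W ε).dart_card_eq_twice_card_edges
  rw [Nat.card_coe_set_eq, Nat.card_eq_fintype_card, SimpleGraph.card_edgeSet] at h1
  have h3 : Nat.card (simple ι hι W ε).Dart ≤ Nat.card {x | ι x ≠ x} := by
    have hex : ∀ d : (simple ι hι W ε).Dart, ∃ l, ι l ≠ l ∧ ε l = d.fst ∧ ε (ι l) = d.snd :=
      fun d => d.adj.2
    choose k k1 k2 k3 using hex
    refine Nat.card_le_card_of_injective (fun d => (⟨k d, k1 d⟩ : {x | ι x ≠ x})) ?_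
    intro d d' hd
    have hd : k d = k d' := congrArg Subtype.val hd
    apply SimpleGraph.Dart.ext
    apply Prod.ext
    · exact Subtype.ext (by rw [← k2, ← k2, hd])
    · exact Subtype.ext (by rw [← k3, ← k3, hd])
  rw [Nat.card_eq_fintype_card, h2, Nat.card_coe_set_eq] at h3
  omega

theorem eqvGen_of_reflTransGen {X : Type} {r : X → X → Prop} {x y : X}
    (h : Relation.ReflTransGen r x y) : Relation.EqvGen r x y := by
  induction h with
  | refl => exact .refl _
  | tail _ h ih => exact ih.trans _ _ _ (.rel _ _ h)

/-- A connected graph with more edges than a tree has an edge outside of some spanning tree; such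
an edge may be cut. -/
theorem exists_nonbridge [Finite H] [Finite V] (hι : ∀ x, ι (ι x) = x) (hne : W.Nonempty)
    (hm : ∀ x, ι x ≠ x → ε x ∈ W) (hc : Conn ι W ε)
    (hcard : 2 * W.ncard ≤ {x | ι x ≠ x}.ncard + 1) :
    ∃ h, ι h ≠ h ∧ Conn (cut ι h) W ε := by
  obtain ⟨T, hT, hTree⟩ := (simple_connected hι hne hm hc).exists_isTree_le
  have := Fintype.ofFinite W
  have h1 := hTree.card_edgeFinset
  have hex : ∀ e : Sym2 W, ∃ l : H, e ∈ T.edgeSet → ι l ≠ l ∧ s(ε l, ε (ι l)) = e.map (↑) := by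
    intro e
    by_cases he : e ∈ T.edgeSet
    · induction e with
      | _ u v =>
        obtain ⟨_, l, l1, l2, l3⟩ := hT he
        exact ⟨l, fun _ => ⟨l1, by simp [l2, l3]⟩⟩
    · obtain ⟨l⟩ : Nonempty H := by
        by_contra hH
        rw [not_nonempty_iff] at hH
        have : {x | ι x ≠ x}.ncard = 0 := by
          rw [Set.ncard_eq_zero]; exact Set.eq_empty_of_isEmpty _
        have := hne.ncard_pos
        omega
      exact ⟨l, fun h => absurd h he⟩
  choose k hk using hex
  let S : Finset H := T.edgeFinset.image k ∪ T.edgeFinset.image (ι ∘ k)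
  have hS : S.card + 2 ≤ 2 * W.ncard := by
    have a := Finset.card_union_le (T.edgeFinset.image k) (T.edgeFinset.image (ι ∘ k))
    have b := Finset.card_image_le (s := T.edgeFinset) (f := k)
    have c := Finset.card_image_le (s := T.edgeFinset) (f := ι ∘ k)
    have d : Fintype.card W = W.ncard := by
      rw [← Nat.card_eq_fintype_card, Nat.card_coe_set_eq]
    change (T.edgeFinset.image k ∪ T.edgeFinset.image (ι ∘ k)).card + 2 ≤ _
    omega
  obtain ⟨h, hh, hn⟩ := Set.exists_mem_notMem_of_ncard_lt_ncard
    (s := (S : Set H)) (t := {x | ι x ≠ x}) (by rw [Set.ncard_coe_finset]; omega)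
    (Set.toFinite _)
  refine ⟨h, hh, fun u hu v hv => ?_⟩
  have hr := hTree.1.preconnected ⟨u, hu⟩ ⟨v, hv⟩
  rw [SimpleGraph.reachable_iff_reflTransGen] at hr
  have hr' := eqvGen_of_reflTransGen hr
  refine eqvGen_map (f := Subtype.val) ?_ hr'
  intro x y hxy
  obtain ⟨k1, k2⟩ := hk s(x, y) hxy
  have n1 : k s(x, y) ≠ h := fun e => hn (by
    simp only [S, Finset.coe_union, Finset.coe_image, Set.mem_union]
    exact .inl ⟨_, by simpa using hxy, e⟩)
  have n2 : k s(x, y) ≠ ι h := fun e => hn (by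
    simp only [S, Finset.coe_union, Finset.coe_image, Set.mem_union]
    exact .inr ⟨s(x, y), by simpa using hxy, by simp [e, hι]⟩)
  have n3 := (cut_ne (ι := ι)).2 ⟨n1, n2, k1⟩
  have hadj : Adj (cut ι h) ε (ε (k s(x, y))) (ε (ι (k s(x, y)))) :=
    ⟨_, n3, rfl, by rw [cut_eq n3]⟩
  rw [Sym2.map_mk, Sym2.eq_iff] at k2
  rcases k2 with ⟨e1, e2⟩ | ⟨e1, e2⟩
  · rw [e1, e2] at hadj; exact .rel _ _ hadj
  · rw [e1, e2] at hadj; exact .symm _ _ (.rel _ _ hadj)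

/-! ### Connectedness under flips -/

theorem Reg.ncard_preimage [Finite H] [Finite V] (hr : Reg ε) (W : Set V) :
    (ε ⁻¹' W).ncard = 3 * W.ncard := by
  induction W, Set.toFinite W using Set.Finite.induction_on with
  | empty => simp
  | @insert v s hv _ ih =>
    rw [Set.insert_eq, Set.preimage_union, Set.ncard_union_eq, Set.ncard_union_eq, ih]
    · have := hr v
      rw [show ε ⁻¹' {v} = {x | ε x = v} from rfl, this]
      simp; ring
    · simpa using hv
    · exact Disjoint.preimage _ (by simpa using hv)

/-- At a vertex carrying two legs `a` and `b`, the third half-edge `c` belongs to an edge leading to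
another vertex, as the vertex would otherwise be disconnected from the rest of `W`. -/
theorem exists_third_edge [Finite H] (hι : ∀ x, ι (ι x) = x) (hg : Good ι W ε) {a b : H}
    (hab : a ≠ b) (ha : ι a = a) (hb : ι b = b) (he : ε a = ε b) (hW : W.Nontrivial)
    (haW : ε a ∈ W) :
    ∃ c, ι c ≠ c ∧ ε (ι c) ≠ ε a ∧ ∀ x, ε x = ε a ↔ x = a ∨ x = b ∨ x = c := by
  obtain ⟨c, hc, hca, hcb⟩ := hg.reg.exists_third (ε a) a b
  have hall : ∀ x, ε x = ε a ↔ x = a ∨ x = b ∨ x = c := by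
    have hsub : ({a, b, c} : Set H) ⊆ {x | ε x = ε a} := by
      rintro x (rfl | rfl | rfl)
      · rfl
      · exact he.symm
      · exact hc
    have h3 : ({a, b, c} : Set H).ncard = 3 :=
      Set.ncard_eq_three.2 ⟨a, b, c, hab, hca.symm, hcb.symm, rfl⟩
    have := Set.eq_of_subset_of_ncard_le hsub (by rw [h3, hg.reg]) (Set.toFinite _)
    intro x
    exact (Set.ext_iff.1 this x).symm
  by_contra hcon
  have hloop : ∀ x, ε x = ε a → ι x ≠ x → ε (ι x) = ε a := by
    intro x hx hx'
    by_contra hne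
    rcases (hall x).1 hx with rfl | rfl | rfl
    · exact hx' ha
    · exact hx' hb
    · exact hcon ⟨x, hx', hne, hall⟩
  obtain ⟨w, hw, hwa⟩ := hW.exists_ne (ε a)
  have := eqvGen_map (f := fun v => v = ε a) (s := Eq) ?_ (hg.conn w hw (ε a) haW)
  · rw [Equivalence.eqvGen_iff eq_equivalence] at this
    exact hwa (this.symm ▸ rfl)
  · rintro _ _ ⟨l, l1, rfl, rfl⟩
    refine .rel _ _ (propext ⟨fun h => hloop l h l1, fun h => ?_⟩)
    have := hloop (ι l) h (by rw [hι]; exact l1.symm)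
    rwa [hι] at this

/-- Cutting off a vertex that carries two legs leaves a connected graph. -/
theorem Good.prune (hι : ∀ x, ι (ι x) = x) (hg : Good ι W ε) {a b c : H}
    (ha : ι a = a) (hb : ι b = b) (hc : ι c ≠ c) (hcv : ε (ι c) ≠ ε a)
    (hall : ∀ x, ε x = ε a ↔ x = a ∨ x = b ∨ x = c) :
    Good (cut ι c) (W \ {ε a}) ε where
  reg := hg.reg
  mem x hx := by
    obtain ⟨h1, h2, h3⟩ := cut_ne.1 hx
    refine ⟨hg.mem x h3, fun e => ?_⟩
    rcases (hall x).1 e with rfl | rfl | rfl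
    · exact h3 ha
    · exact h3 hb
    · exact h1 rfl
  conn u hu v hv := by
    have hεc : ε c = ε a := (hall c).2 (.inr (.inr rfl))
    have hl : ∀ l, ι l ≠ l → ε l = ε a → l = c := by
      intro l h1 h2
      rcases (hall l).1 h2 with rfl | rfl | rfl
      · exact absurd ha h1
      · exact absurd hb h1
      · rfl
    -- collapse the vertex `ε a` onto its only neighbour
    have key := eqvGen_map (f := fun x => if x = ε a then ε (ι c) else x)
      (s := Adj (cut ι c) ε) ?_ (hg.conn u hu.1 v hv.1)
    · simpa only [if_neg (show ¬ u = ε a from hu.2), if_neg (show ¬ v = ε a from hv.2)] using key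
    · rintro _ _ ⟨l, l1, rfl, rfl⟩
      by_cases e1 : l = c
      · subst e1; simp only [hεc, hcv, if_true, if_false]; exact .refl _
      by_cases e2 : l = ι c
      · subst e2; simp only [hι, hεc, hcv, if_true, if_false]; exact .refl _
      have n1 : ε l ≠ ε a := fun e => e1 (hl l l1 e)
      have n2 : ε (ι l) ≠ ε a := fun e => e2 (by
        rw [← hl (ι l) (by rw [hι]; exact l1.symm) e, hι])
      simp only [n1, n2, if_false]
      have n3 := (cut_ne (ι := ι)).2 ⟨e1, e2, l1⟩
      exact .rel _ _ ⟨l, n3, rfl, by rw [cut_eq n3]⟩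

/-- Two `3`-regular graphs on the same half-edges, vertices, edges and legs, connected on `W` and equal
outside of `W`, are related by flips and a relabelling. The proof is by induction on the number of edges. If `W` carries two legs, both are
brought to a common vertex, which is then cut off; otherwise the graph is not a tree, and an edge
which is not a bridge is cut into two legs. -/
theorem rel_of_good [Finite H] [Finite V] (N : ℕ) : ∀ (ι : H → H) (W : Set V) (ε ε' : H → V),
    (∀ x, ι (ι x) = x) → W.Nonempty → Good ι W ε → Good ι W ε' → Agree W ε ε' →
    {x | ι x ≠ x}.ncard = N → Rel ι ε ε' := by
  induction N using Nat.strong_induction_on with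
  | _ N ih =>
  intro ι W ε ε' hι hne hg hg' ha hN
  by_cases hW : W.Nontrivial
  swap
  · rw [Set.not_nontrivial_iff] at hW
    have : ε = ε' := by
      ext x
      by_cases hx : ε x ∈ W ∧ ε' x ∈ W
      · exact hW hx.1 hx.2
      · exact ha x (by tauto)
    exact .of_reach (this ▸ .refl)
  have hAW : ∀ {ε ε' : H → V}, Agree W ε ε' → ∀ x, ε x ∈ W → ε' x ∈ W := by
    intro ε ε' h x hx
    by_contra hn
    exact hn (h x (.inr hn) ▸ hx)
  by_cases hleg : ∃ a b, a ≠ b ∧ ι a = a ∧ ι b = b ∧ ε a ∈ W ∧ ε b ∈ W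
  · obtain ⟨a, b, hab, hla, hlb, haW, hbW⟩ := hleg
    -- bring the two legs together in both graphs
    obtain ⟨j, hj⟩ := exists_near hι (hg.conn _ haW _ hbW)
    obtain ⟨ε₁, r1, e1⟩ := exists_cherry hι hab hla j ε hg.reg hj
    obtain ⟨j', hj'⟩ := exists_near hι (hg'.conn _ (hAW ha a haW) _ (hAW ha b hbW))
    obtain ⟨ε₁', r1', e1'⟩ := exists_cherry hι hab hla j' ε' hg'.reg hj'
    obtain ⟨g1, ag1⟩ := reach_good hι hg r1
    obtain ⟨g1', ag1'⟩ := reach_good hι hg' r1'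
    have v1 := hAW ag1 a haW
    have v1' := hAW ag1' a (hAW ha a haW)
    obtain ⟨c, hc, hcv, hall⟩ := exists_third_edge hι g1 hab hla hlb e1 hW v1
    obtain ⟨c', hc', hcv', hall'⟩ := exists_third_edge hι g1' hab hla hlb e1' hW v1'
    obtain ⟨τ, hτ, hτc⟩ := exists_aut hι hc hc'
    -- `σ` and `τ` relabel the second graph so that `a`, `b` and `c` meet at the same vertex in both
    let σ : Equiv.Perm V := Equiv.swap (ε₁' a) (ε₁ a)
    have hσ : ∀ v, v ∉ W → σ v = v := fun v hv =>
      Equiv.swap_apply_of_ne_of_ne (fun e => hv (e ▸ v1')) (fun e => hv (e ▸ v1))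
    let ε₂ := σ ∘ ε₁' ∘ τ
    have g2 : Good ι W ε₂ := g1'.relabel hσ hτ
    have ag2 : Agree W ε₁ ε₂ := (ag1.symm.trans (ha.trans ag1')).relabel g1 g1' hσ hτ
    have h2a : ε₂ a = ε₁ a := by simp [ε₂, σ, hτ.2 a hla]
    have hall2 : ∀ x, ε₂ x = ε₂ a ↔ x = a ∨ x = b ∨ x = c := by
      intro x
      have h1 : ε₂ x = ε₂ a ↔ ε₁' (τ x) = ε₁' a := by
        simp only [ε₂, Function.comp_apply, hτ.2 a hla]
        exact σ.injective.eq_iff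
      have h2 : τ x = a ↔ x = a := by
        conv_lhs => rw [← hτ.2 a hla]
        exact τ.injective.eq_iff
      have h3 : τ x = b ↔ x = b := by
        conv_lhs => rw [← hτ.2 b hlb]
        exact τ.injective.eq_iff
      have h4 : τ x = c' ↔ x = c := by
        rw [← hτc]
        exact τ.injective.eq_iff
      rw [h1, hall', h2, h3, h4]
    have hcv2 : ε₂ (ι c) ≠ ε₂ a := by
      simp only [ε₂, Function.comp_apply, hτ.2 a hla, hτ.1, hτc]
      exact fun e => hcv' (σ.injective e)
    have p1 := g1.prune hι hla hlb hc hcv hall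
    have p2 := g2.prune hι hla hlb hc hcv2 hall2
    rw [h2a] at p2 hall2
    have pa : Agree (W \ {ε₁ a}) ε₁ ε₂ := by
      intro x hx
      have h1 := hall x
      have h2 := hall2 x
      have h3 := ag2 x
      simp only [Set.mem_sdiff, Set.mem_singleton_iff] at hx
      grind
    have hne' : (W \ {ε₁ a}).Nonempty := by
      obtain ⟨w, hw, hwa⟩ := hW.exists_ne (ε₁ a)
      exact ⟨w, hw, hwa⟩
    have hr := ih _ (hN ▸ cut_ncard_lt hc) (cut ι c) _ ε₁ ε₂ (cut_invol hι c) hne' p1 p2 pa rfl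
    exact (Rel.of_reach r1).trans <| (hr.of_cut hι).trans <|
      (Rel.of_relabel σ hτ).trans (.of_reach (reach_symm hι r1'))
  · have hcard : 2 * W.ncard ≤ {x | ι x ≠ x}.ncard + 1 := by
      -- at most one of the `3 * W.ncard` half-edges in `W` is a leg, the others are sides of edges
      have hl : {x | ι x = x ∧ ε x ∈ W}.ncard ≤ 1 := by
        rw [Set.ncard_le_one (Set.toFinite _)]
        intro a hla b hlb
        by_contra hab
        exact hleg ⟨a, b, hab, hla.1, hlb.1, hla.2, hlb.2⟩
      have hsub : ε ⁻¹' W ⊆ {x | ι x ≠ x} ∪ {x | ι x = x ∧ ε x ∈ W} := by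
        intro x hx
        by_cases h : ι x = x
        · exact .inr ⟨h, hx⟩
        · exact .inl h
      have h1 := Set.ncard_le_ncard hsub (Set.toFinite _)
      have h2 := Set.ncard_union_le {x | ι x ≠ x} {x | ι x = x ∧ ε x ∈ W}
      rw [hg.reg.ncard_preimage] at h1
      omega
    obtain ⟨h, hh, hc⟩ := exists_nonbridge hι hne hg.mem hg.conn hcard
    obtain ⟨h', hh', hc'⟩ := exists_nonbridge hι hne hg'.mem hg'.conn hcard
    obtain ⟨τ, hτ, hτh⟩ := exists_aut hι hh hh'
    have h1 : ∀ v, v ∉ W → (1 : Equiv.Perm V) v = v := fun _ _ => rfl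
    have g2 := hg'.relabel h1 hτ
    have a2 := ha.relabel hg hg' h1 hτ
    have hcut : ∀ x, τ (cut ι h x) = cut ι h' (τ x) := by
      intro x
      have e1 : τ x = h' ↔ x = h := by rw [← hτh]; exact τ.injective.eq_iff
      have e2 : τ x = ι h' ↔ x = ι h := by rw [← hτh, ← hτ.1]; exact τ.injective.eq_iff
      simp only [cut, e1, e2]
      split_ifs
      · rfl
      · exact hτ.1 x
    have hr := ih _ (hN ▸ cut_ncard_lt hh) (cut ι h) W ε _ (cut_invol hι h) hne
      ⟨hg.reg, fun x hx => hg.mem x (cut_ne.1 hx).2.2, hc⟩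
      ⟨g2.reg, fun x hx => g2.mem x (cut_ne.1 hx).2.2, hc'.relabel h1 hcut⟩ a2 rfl
    exact (hr.of_cut hι).trans (.of_relabel 1 hτ)

end basics

/-! ### Counting edges of legged graphs -/

section graphs

variable {n : ℕ}

theorem edgeMk_eq (G : LeggedGraph n) {x y : {h : G.H // G.ι h ≠ h}}
    (h : (Quot.mk _ x : G.Edge) = Quot.mk _ y) : y = x ∨ (y : G.H) = G.ι x := by
  have := Quot.eqvGen_exact h
  clear h
  induction this with
  | rel x y h => exact .inr h
  | refl x => exact .inl rfl
  | symm x y _ ih =>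
    rcases ih with h | h
    · exact .inl h.symm
    · exact .inr (by rw [h, G.ι_invol])
  | trans x y z h1 h2 ih ih' =>
    rcases ih with rfl | h3 <;> rcases ih' with rfl | h4
    · exact .inl rfl
    · exact .inr h4
    · exact .inr h3
    · exact .inl (Subtype.ext (by rw [h4, h3, G.ι_invol]))

/-- Every half-edge is a leg or one of the two sides of an edge, the sides of each edge being
numbered by choosing a representative. -/
noncomputable def param (G : LeggedGraph n) : Fin n ⊕ (G.Edge × Bool) → G.H
  | .inl i => G.leg i
  | .inr (e, false) => (Quot.out e).1
  | .inr (e, true) => G.ι (Quot.out e).1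

theorem param_bijective (G : LeggedGraph n) : Function.Bijective (param G) := by
  have hout : ∀ e : G.Edge, G.ι (Quot.out e).1 ≠ (Quot.out e).1 := fun e => (Quot.out e).2
  have hinj : ∀ e e' : G.Edge, ((Quot.out e).1 = (Quot.out e').1 ∨
      (Quot.out e).1 = G.ι (Quot.out e').1) → e = e' := by
    intro e e' h
    rw [← Quot.out_eq e, ← Quot.out_eq e']
    rcases h with h | h
    · rw [Subtype.ext h]
    · exact (Quot.sound (r := fun h h' : {h : G.H // G.ι h ≠ h} => (h' : G.H) = G.ι (h : G.H)) h).symm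
  have hleg : ∀ i (e : G.Edge), G.leg i ≠ (Quot.out e).1 := fun i e h =>
    hout e (by rw [← h, G.leg_fix])
  have hleg' : ∀ i (e : G.Edge), G.leg i ≠ G.ι (Quot.out e).1 := fun i e h =>
    hleg i e (by rw [← G.leg_fix, h, G.ι_invol])
  constructor
  · rintro (i | ⟨e, _ | _⟩) (j | ⟨e', _ | _⟩) h <;> simp only [param] at h
    · rw [G.leg_inj h]
    · exact absurd h (hleg _ _)
    · exact absurd h (hleg' _ _)
    · exact absurd h.symm (hleg _ _)
    · rw [hinj e e' (.inl h)]
    · have := hinj e e' (.inr h)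
      subst this
      exact absurd h.symm (hout e)
    · exact absurd h.symm (hleg' _ _)
    · have := hinj e' e (.inr h.symm)
      subst this
      exact absurd h (hout _)
    · rw [hinj e e' (.inl (by rw [← G.ι_invol (Quot.out e).1, h, G.ι_invol]))]
  · intro x
    by_cases hx : G.ι x = x
    · obtain ⟨i, hi⟩ := G.fix_leg x hx
      exact ⟨.inl i, hi⟩
    · have := edgeMk_eq G (Quot.out_eq (Quot.mk _ ⟨x, hx⟩ : G.Edge))
      rcases this with h | h
      · exact ⟨.inr (Quot.mk _ ⟨x, hx⟩, false), (congrArg Subtype.val h).symm⟩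
      · exact ⟨.inr (Quot.mk _ ⟨x, hx⟩, true), h.symm⟩

theorem card_H (G : LeggedGraph n) : Nat.card G.H = n + 2 * G.numEdges := by
  have : Finite G.Edge := inferInstanceAs (Finite (Quot _))
  rw [← Nat.card_congr (Equiv.ofBijective _ (param_bijective G)), Nat.card_sum, Nat.card_prod,
    Nat.card_fin, Nat.card_eq_fintype_card (α := Bool), Fintype.card_bool, mul_comm]
  rfl

theorem card_nonfixed (G : LeggedGraph n) : {x | G.ι x ≠ x}.ncard = 2 * G.numEdges := by
  have h1 : {x | G.ι x ≠ x}ᶜ = Set.range G.leg := by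
    ext x
    simp only [Set.mem_compl_iff, Set.mem_ofPred_eq, not_not, Set.mem_range]
    exact ⟨G.fix_leg x, by rintro ⟨i, rfl⟩; exact G.leg_fix i⟩
  have h2 : (Set.range G.leg).ncard = n := by
    rw [← Set.image_univ, Set.ncard_image_of_injective _ G.leg_inj, Set.ncard_univ, Nat.card_fin]
  have h3 := Set.ncard_add_ncard_compl {x | G.ι x ≠ x}
  rw [h1, h2, card_H] at h3
  omega

theorem isConnected_iff (G : LeggedGraph n) : G.IsConnected ↔ Conn G.ι Set.univ G.ε :=
  ⟨fun h u _ v _ => h u v, fun h u v => h u trivial v trivial⟩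

/-- The defining subtraction of `b1` does not truncate for a connected graph. -/
theorem b1_eq (G : LeggedGraph n) (hc : G.IsConnected) :
    G.b1 + Nat.card G.V = G.numEdges + 1 := by
  have h1 : G.numComps = 1 := by
    unfold numComps
    rw [Nat.card_eq_one_iff_unique]
    refine ⟨⟨fun a b => ?_⟩, ⟨Quot.mk _ (Classical.arbitrary G.V)⟩⟩
    induction a using Quot.ind
    induction b using Quot.ind
    exact Quot.eqvGen_sound (hc _ _)
  have h2 := card_le G.ι_invol Set.univ_nonempty (fun _ _ => trivial) ((isConnected_iff G).1 hc)
  rw [card_nonfixed, Set.ncard_univ] at h2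
  unfold b1
  omega

/-! ### Contracting one edge -/

theorem mem_sym_singleton (G : LeggedGraph n) {h l : G.H} (hh : G.ι h ≠ h) :
    l ∈ G.sym {h} ↔ l = h ∨ l = G.ι h := by
  simp only [sym, Set.mem_singleton_iff, Set.mem_ofPred_eq]
  constructor
  · rintro ⟨h1 | h1, _⟩
    · exact .inl h1
    · exact .inr (by rw [← h1, G.ι_invol])
  · rintro (rfl | rfl)
    · exact ⟨.inl rfl, hh⟩
    · exact ⟨.inr (G.ι_invol h), by rw [G.ι_invol]; exact hh.symm⟩

theorem contract_connected (G : LeggedGraph n) (S : Set G.H) (hc : G.IsConnected) :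
    (G.contract S).IsConnected := by
  intro u v
  induction u using Quot.ind with | mk u =>
  induction v using Quot.ind with | mk v =>
  refine eqvGen_map (f := (Quot.mk (G.contrRel S) : G.V → (G.contract S).V)) ?_ (hc u v)
  rintro _ _ ⟨l, l1, rfl, rfl⟩
  by_cases hl : l ∈ G.sym S
  · have : (Quot.mk (G.contrRel S) (G.ε l) : (G.contract S).V) = Quot.mk _ (G.ε (G.ι l)) :=
      Quot.sound ⟨l, hl, rfl, rfl⟩
    rw [this]
    exact .refl _
  · exact .rel _ _ ⟨⟨l, hl⟩, fun e => l1 (congrArg Subtype.val e), rfl, rfl⟩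

/-- The vertices of the contraction are those of `G` other than one end of the contracted edge. -/
theorem contract_card_V (G : LeggedGraph n) {h : G.H} (hh : G.ι h ≠ h)
    (hv : G.ε (G.ι h) ≠ G.ε h) : Nat.card (G.contract {h}).V + 1 = Nat.card G.V := by
  let f : {x : G.V // x ∈ ({G.ε (G.ι h)} : Set G.V)ᶜ} → (G.contract {h}).V :=
    fun x => Quot.mk _ x.1
  let r : (G.contract {h}).V → G.V :=
    Quot.lift (fun x => if x = G.ε (G.ι h) then G.ε h else x) (by
      rintro _ _ ⟨l, hl, rfl, rfl⟩
      rcases (mem_sym_singleton G hh).1 hl with rfl | rfl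
      · simp
      · simp [G.ι_invol])
  have hf : Function.Bijective f := by
    constructor
    · intro x y hxy
      have h1 : r (f x) = x := if_neg x.2
      have h2 : r (f y) = y := if_neg y.2
      exact Subtype.ext (by rw [← h1, ← h2, hxy])
    · intro q
      induction q using Quot.ind with | mk x =>
      by_cases hx : x = G.ε (G.ι h)
      · refine ⟨⟨G.ε h, fun e => hv e.symm⟩, ?_⟩
        subst hx
        exact Quot.sound ⟨h, (mem_sym_singleton G hh).2 (.inl rfl), rfl, rfl⟩
      · exact ⟨⟨x, hx⟩, rfl⟩
  rw [← Nat.card_congr (Equiv.ofBijective f hf), Nat.card_coe_set_eq,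
    ← Set.ncard_add_ncard_compl {G.ε (G.ι h)}, Set.ncard_singleton, add_comm]

theorem contract_numEdges (G : LeggedGraph n) {h : G.H} (hh : G.ι h ≠ h) :
    (G.contract {h}).numEdges + 1 = G.numEdges := by
  have h1 := card_H G
  have h2 := card_H (G.contract {h})
  have h3 : Nat.card (G.contract {h}).H = ((G.sym {h})ᶜ).ncard := rfl
  have h4 : (G.sym {h}).ncard = 2 := by
    have : G.sym {h} = {h, G.ι h} := by
      ext l; rw [mem_sym_singleton G hh]; rfl
    rw [this, Set.ncard_pair hh.symm]
  have h5 := Set.ncard_add_ncard_compl (G.sym {h})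
  omega

theorem contract_b1 (G : LeggedGraph n) {h : G.H} (hh : G.ι h ≠ h)
    (hv : G.ε (G.ι h) ≠ G.ε h) (hc : G.IsConnected) : (G.contract {h}).b1 = G.b1 := by
  have h1 := b1_eq G hc
  have h2 := b1_eq _ (contract_connected G {h} hc)
  have h3 := contract_card_V G hh hv
  have h4 := contract_numEdges G hh
  omega

theorem GIso.refl (G : LeggedGraph n) : GIso G G :=
  ⟨.refl _, .refl _, fun _ => rfl, fun _ => rfl, fun _ => rfl⟩

/-! ### From flips to sequences of graphs -/

/-- The graph `G` with its endpoint map replaced by `ε`. -/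
def withE (G : LeggedGraph n) (ε : G.H → G.V) : LeggedGraph n := { G with ε := ε }

/-- The two sides of a flip have a common contraction along the flipped edge. -/
theorem Flip.contr (G : LeggedGraph n) {ε ε₁ : G.H → G.V} (hf : Flip G.ι ε ε₁)
    (hc : (withE G ε).IsConnected) :
    ∃ C, C.IsConnected ∧ C.b1 = (withE G ε).b1 ∧
      OneEdgeContr (withE G ε) C ∧ OneEdgeContr (withE G ε₁) C := by
  obtain ⟨h, b, c, h1, h2, h3, h4, h5, h6, rfl⟩ := hf
  have hb : b ≠ G.ι h := fun e => h6 (by rw [← h4, e])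
  have hc' : c ≠ h := fun e => h6 (by rw [← h5, e])
  have e1 : (ε ∘ Equiv.swap b c) h = ε h := by
    simp [Equiv.swap_apply_of_ne_of_ne h2.symm hc'.symm]
  have e2 : (ε ∘ Equiv.swap b c) (G.ι h) = ε (G.ι h) := by
    simp [Equiv.swap_apply_of_ne_of_ne hb.symm h3.symm]
  have hrel : (withE G (ε ∘ Equiv.swap b c)).contrRel {h} = (withE G ε).contrRel {h} := by
    have key : ∀ l ∈ G.sym {h}, (ε ∘ Equiv.swap b c) l = ε l := by
      intro l hl
      rcases (mem_sym_singleton G h1).1 hl with rfl | rfl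
      · exact e1
      · exact e2
    funext u v
    apply propext
    constructor
    · rintro ⟨l, hl, rfl, rfl⟩
      exact ⟨l, hl, (key l hl).symm, (key _ (sym_iota_mem (G := G) hl)).symm⟩
    · rintro ⟨l, hl, rfl, rfl⟩
      exact ⟨l, hl, key l hl, key _ (sym_iota_mem (G := G) hl)⟩
  refine ⟨(withE G ε).contract {h}, contract_connected _ _ hc,
    contract_b1 (withE G ε) h1 h6.symm hc, ⟨h, h1, h6.symm, GIso.refl _⟩,
    ⟨h, h1, ?_, ?_⟩⟩
  · change (ε ∘ Equiv.swap b c) (G.ι h) ≠ (ε ∘ Equiv.swap b c) h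
    rw [e1, e2]; exact h6.symm
  · refine ⟨Quot.congr (Equiv.refl _) (fun u v => iff_of_eq (congrFun (congrFun hrel u) v)), Equiv.refl _,
      fun _ => rfl, ?_, fun _ => rfl⟩
    have hglue : Quot.mk ((withE G ε).contrRel {h}) (ε h) =
        Quot.mk ((withE G ε).contrRel {h}) (ε (G.ι h)) :=
      Quot.sound ⟨h, (mem_sym_singleton G h1).2 (.inl rfl), rfl, rfl⟩
    suffices hmain : ∀ l : G.H, Quot.mk ((withE G ε).contrRel {h}) ((ε ∘ Equiv.swap b c) l) =
        Quot.mk ((withE G ε).contrRel {h}) (ε l) from fun l => hmain l.1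
    intro l
    by_cases l1 : l = b
    · subst l1
      simp only [Function.comp_apply, Equiv.swap_apply_left, h4, h5]
      exact hglue.symm
    by_cases l2 : l = c
    · subst l2
      simp only [Function.comp_apply, Equiv.swap_apply_right, h4, h5]
      exact hglue
    · simp [Equiv.swap_apply_of_ne_of_ne l1 l2]

theorem withE_b1 (G : LeggedGraph n) {ε : G.H → G.V} (hc : G.IsConnected)
    (hc' : (withE G ε).IsConnected) : (withE G ε).b1 = G.b1 := by
  have h1 := b1_eq G hc
  have h2 := b1_eq _ hc'
  have h3 : (withE G ε).numEdges = G.numEdges := rfl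
  have h4 : Nat.card (withE G ε).V = Nat.card G.V := rfl
  omega

/-- A chain of flips, with the common contractions inserted in between, is a sequence of graphs
of the required kind. -/
theorem exists_seq (G : LeggedGraph n) (hc : G.IsConnected) (h3 : G.ThreeRegular)
    {ε : G.H → G.V} (hr : Relation.ReflTransGen (Flip G.ι) G.ε ε) :
    ∃ (h : ℕ) (f : ℕ → LeggedGraph n),
      f 1 = G ∧ f (2 * h + 1) = withE G ε ∧
      (∀ k, 1 ≤ k → k ≤ 2 * h + 1 → (f k).IsConnected ∧ (f k).b1 = G.b1) ∧
      (∀ k, 1 ≤ k → k ≤ 2 * h + 1 → Odd k → (f k).ThreeRegular) ∧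
      (∀ i, 1 ≤ i → i ≤ h →
        OneEdgeContr (f (2 * i - 1)) (f (2 * i)) ∧
        OneEdgeContr (f (2 * i + 1)) (f (2 * i))) := by
  have hg : Good G.ι Set.univ G.ε := ⟨h3, fun _ _ => trivial, (isConnected_iff G).1 hc⟩
  have hconn : ∀ {ε : G.H → G.V}, Relation.ReflTransGen (Flip G.ι) G.ε ε →
      (withE G ε).IsConnected := fun h =>
    (isConnected_iff (withE G _)).2 (reach_good G.ι_invol hg h).1.conn
  induction hr with
  | refl =>
    exact ⟨0, fun _ => G, rfl, rfl, fun _ _ _ => ⟨hc, rfl⟩, fun _ _ _ _ => h3, fun i _ _ => by omega⟩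
  | @tail ε ε₁ hr hf ih =>
    obtain ⟨h, f, f1, f2, f3, f4, f5⟩ := ih
    obtain ⟨C, C1, C2, C3, C4⟩ := hf.contr G (hconn hr)
    have hr1 := hr.tail hf
    let f' : ℕ → LeggedGraph n := fun k =>
      if k ≤ 2 * h + 1 then f k else if k = 2 * h + 2 then C else withE G ε₁
    have a1 : ∀ k, k ≤ 2 * h + 1 → f' k = f k := fun k hk => by simp [f', hk]
    have a2 : f' (2 * h + 2) = C := by simp [f']
    have a3 : f' (2 * h + 3) = withE G ε₁ := by simp [f']
    refine ⟨h + 1, f', ?_, a3, fun k k1 k2 => ?_, fun k k1 k2 ko => ?_, fun i i1 i2 => ?_⟩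
    · rw [a1 1 (by omega), f1]
    · obtain hk | rfl | rfl : k ≤ 2 * h + 1 ∨ k = 2 * h + 2 ∨ k = 2 * h + 3 := by omega
      · rw [a1 k hk]; exact f3 k k1 hk
      · rw [a2]; exact ⟨C1, C2.trans (withE_b1 G hc (hconn hr))⟩
      · rw [a3]; exact ⟨hconn hr1, withE_b1 G hc (hconn hr1)⟩
    · obtain hk | rfl | rfl : k ≤ 2 * h + 1 ∨ k = 2 * h + 2 ∨ k = 2 * h + 3 := by omega
      · rw [a1 k hk]; exact f4 k k1 hk ko
      · obtain ⟨m, hm⟩ := ko; omega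
      · rw [a3]; exact (reach_good G.ι_invol hg hr1).1.reg
    · obtain hi | rfl : i ≤ h ∨ i = h + 1 := by omega
      · rw [a1 _ (by omega), a1 _ (by omega), a1 _ (by omega)]; exact f5 i i1 hi
      · rw [show 2 * (h + 1) - 1 = 2 * h + 1 by omega, show 2 * (h + 1) = 2 * h + 2 by ring, a1 _ le_rfl,
          f2, a2, a3]
        exact ⟨C3, C4⟩

/-- Graphs with equally many edges have identified half-edge sets, edges and legs included. -/
theorem exists_equiv (G G' : LeggedGraph n) (h : G.numEdges = G'.numEdges) :
    ∃ φ : G.H ≃ G'.H, (∀ x, φ (G.ι x) = G'.ι (φ x)) ∧ ∀ i, φ (G.leg i) = G'.leg i := by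
  have : Finite G.Edge := inferInstanceAs (Finite (Quot _))
  have : Finite G'.Edge := inferInstanceAs (Finite (Quot _))
  obtain ⟨e⟩ : Nonempty (G.Edge ≃ G'.Edge) := Finite.card_eq.1 h
  let p := Equiv.ofBijective _ (param_bijective G)
  let p' := Equiv.ofBijective _ (param_bijective G')
  let φ : G.H ≃ G'.H := p.symm.trans ((Equiv.sumCongr (.refl _) (e.prodCongr (.refl _))).trans p')
  have hφ : ∀ y, φ (param G y) =
      param G' (Equiv.sumCongr (.refl _) (e.prodCongr (.refl _)) y) := by
    intro y
    have : p.symm (param G y) = y := p.symm_apply_apply y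
    simp only [φ, Equiv.trans_apply, this]
    rfl
  refine ⟨φ, fun x => ?_, fun i => hφ (.inl i)⟩
  obtain ⟨y, rfl⟩ := (param_bijective G).2 x
  rw [hφ]
  rcases y with i | ⟨d, _ | _⟩
  · exact (congrArg φ (G.leg_fix i)).trans ((hφ (.inl i)).trans (G'.leg_fix i).symm)
  · exact hφ (.inr (d, true))
  · refine (congrArg φ (G.ι_invol _)).trans ((hφ (.inr (d, false))).trans ?_)
    exact (G'.ι_invol _).symm

end graphs

end FlipConn

theorem stmt_12 (g n : ℕ) (G G' : LeggedGraph n)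
    (hc : G.IsConnected) (hc' : G'.IsConnected)
    (h3 : G.ThreeRegular) (h3' : G'.ThreeRegular)
    (hb : G.b1 = g) (hb' : G'.b1 = g) :
    ∃ (h : ℕ) (f : ℕ → LeggedGraph n),
      GIso (f 1) G ∧ GIso (f (2 * h + 1)) G' ∧
      (∀ k, 1 ≤ k → k ≤ 2 * h + 1 → (f k).IsConnected ∧ (f k).b1 = g) ∧
      (∀ k, 1 ≤ k → k ≤ 2 * h + 1 → Odd k → (f k).ThreeRegular) ∧
      (∀ i, 1 ≤ i → i ≤ h →
        OneEdgeContr (f (2 * i - 1)) (f (2 * i)) ∧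
        OneEdgeContr (f (2 * i + 1)) (f (2 * i))) := by 
  have b := FlipConn.b1_eq G hc
  have b' := FlipConn.b1_eq G' hc'
  have k := FlipConn.card_H G
  have k' := FlipConn.card_H G'
  have r := FlipConn.Reg.ncard_preimage (ε := G.ε) h3 Set.univ
  have r' := FlipConn.Reg.ncard_preimage (ε := G'.ε) h3' Set.univ
  rw [Set.preimage_univ, Set.ncard_univ, Set.ncard_univ] at r r'
  obtain ⟨φ, φ1, φ2⟩ := FlipConn.exists_equiv G G' (by omega)
  obtain ⟨ψ⟩ : Nonempty (G.V ≃ G'.V) := Finite.card_eq.1 (by omega)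
  let ε' : G.H → G.V := ψ.symm ∘ G'.ε ∘ φ
  have hg : FlipConn.Good G.ι Set.univ G.ε :=
    ⟨h3, fun _ _ => trivial, (FlipConn.isConnected_iff G).1 hc⟩
  have hg' : FlipConn.Good G.ι Set.univ ε' := by
    refine ⟨fun v => ?_, fun _ _ => trivial, fun u _ v _ => ?_⟩
    · rw [← show Set.ncard {x | G'.ε x = ψ v} = 3 from h3' (ψ v),
        ← Set.ncard_image_of_injective _ φ.injective]
      congr 1
      ext x
      simp only [Set.mem_image, Set.mem_ofPred_eq, ε', Function.comp_apply, Equiv.symm_apply_eq]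
      exact ⟨by rintro ⟨y, hy, rfl⟩; exact hy, fun hx => ⟨φ.symm x, by simpa using hx, by simp⟩⟩
    · have := FlipConn.eqvGen_map (f := ψ.symm) (s := FlipConn.Adj G.ι ε') ?_
        (hc' (ψ u) (ψ v))
      · simpa using this
      · rintro _ _ ⟨l, l1, rfl, rfl⟩
        refine .rel _ _ ⟨φ.symm l, fun e => l1 ?_, by simp [ε'], by simp [ε', φ1]⟩
        have := congrArg φ e
        simpa [φ1] using this
  obtain ⟨σ, τ, hτ, hr⟩ := FlipConn.rel_of_good _ G.ι Set.univ G.ε ε' G.ι_invol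
    Set.univ_nonempty hg hg' (fun x hx => by simp at hx) rfl
  obtain ⟨h, f, f1, f2, f3, f4, f5⟩ := FlipConn.exists_seq G hc h3 hr
  refine ⟨h, f, f1 ▸ FlipConn.GIso.refl _, ?_, hb ▸ f3, f4, f5⟩
  rw [f2]
  refine ⟨σ.symm.trans ψ, τ.trans φ, fun x => ?_, fun x => ?_, fun i => ?_⟩
  · change φ (τ (G.ι x)) = G'.ι (φ (τ x))
    exact (congrArg φ (hτ.1 x)).trans (φ1 _)
  · change ψ (σ.symm (σ (ψ.symm (G'.ε (φ (τ x)))))) = G'.ε (φ (τ x))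
    simp
  · change φ (τ (G.leg i)) = G'.leg i
    rw [hτ.2 _ (G.leg_fix i), φ2]
end

section
/- Fix g, n with 2g − 2 + n ≥ 1. Consider the graph 𝒢 whose nodes are the isomorphism classes of connected stable weighted graphs (Γ, w) of genus g with n labeled legs satisfying |E(Γ)| ≥ 3g − 4 + n, with an edge of 𝒢 joining two classes whenever one is obtained from the other by the weighted contraction of exactly one edge. Then 𝒢 is a connected graph. (This is the combinatorial content of the statement that the tropical moduli space M_{g,n}^{trop} is connected through codimension one.) -/
/-!
Counting half-edges at the vertices shows that a stable graph of genus `g` with `n` legs and at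
least `3g - 4 + n` edges is of one of three kinds: a trivalent graph with zero weights, a graph with
zero weights and a single four-valent vertex besides the trivalent ones, or a graph with zero
weights except for a single leaf vertex of weight one (`exists_cubic`). Graphs of the last two kinds
are contractions of trivalent ones: split the four-valent vertex (`expand_split`), or replace the
weight by a loop (`expand_loop`). It is therefore enough to connect the trivalent graphs.

An elementary move along a non-loop edge of a trivalent graph exchanges two half-edges at its two
ends. Both sides of the move contract to the same graph with a four-valent vertex, so they are
connected by two edges of the graph of isomorphism classes (`move_codimOne`).

Cutting the `g` edges outside a spanning tree presents any connected trivalent graph as a trivalent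
tree with `n + 2g` labeled leaves, together with a pairing of the last `2g` leaves which is the same
for all graphs (`exists_std`). Moves of the tree, and relabelings fixing its leaves, are moves and
isomorphisms of the original graph (`std_eqvGen`). It remains to connect trivalent trees with the
same labeled leaves by elementary moves (`tree_connected`). This is an induction on the number of
vertices: a leaf `l₁` can be moved along the path to another leaf `l₂` until they share a vertex
(`exists_cherry`); doing so in both trees and removing this vertex leaves smaller trees with the same
labeled leaves.

Throughout, trees and graphs are handled as endpoint maps `ε : H → V` on a fixed set of half-edges
with an involution `ι`; the fixed points of `ι` are called leaves.
-/

open scoped ENNReal NNReal Classical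

open LeggedGraph

structure StableWGraph (g n : ℕ) where
  Γ : LeggedGraph n
  w : Γ.V → ℕ
  conn : Γ.IsConnected
  stab : Γ.Stable w
  genus_eq : Γ.genus w = g

def bigStratum (g n : ℕ) (A : StableWGraph g n) : Prop :=
  3 * (g : ℤ) - 4 + n ≤ A.Γ.numEdges

def codimOneRel (g n : ℕ) (A B : StableWGraph g n) : Prop :=
  bigStratum g n A ∧ bigStratum g n B ∧
    (WIso A.Γ A.w B.Γ B.w ∨ OneEdgeWContr A.Γ A.w B.Γ B.w ∨
      OneEdgeWContr B.Γ B.w A.Γ A.w)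

namespace TropConn

open Relation

/-! ### Involutions on finite types -/

/-- A fixed-point-free involution `σ` presents its domain as two copies of its orbit space. -/
lemma exists_equiv_quot_bool {X : Type} (σ : X → X) (hσ : ∀ x, σ (σ x) = x)
    (hf : ∀ x, σ x ≠ x) (r : X → X → Prop) (hr : ∀ x y, r x y ↔ y = σ x) :
    ∃ e : X ≃ Quot r × Bool, ∀ x, e (σ x) = ((e x).1, !(e x).2) := by
  have key : ∀ x y, Quot.mk r x = Quot.mk r y → y = x ∨ y = σ x := by
    intro x y h
    induction Quot.eqvGen_exact h with
    | rel a b hab => exact Or.inr ((hr _ _).1 hab)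
    | refl a => exact Or.inl rfl
    | symm a b hab ih =>
      rcases ih (Quot.eqvGen_sound hab) with h | h
      · exact Or.inl h.symm
      · right; rw [h, hσ]
    | trans a b c hab hbc ih1 ih2 =>
      rcases ih1 (Quot.eqvGen_sound hab) with h | h <;>
      rcases ih2 (Quot.eqvGen_sound hbc) with h' | h' <;> subst h <;> subst h'
      · exact Or.inl rfl
      · exact Or.inr rfl
      · exact Or.inr rfl
      · exact Or.inl (hσ _)
  have hs : ∀ x, Quot.mk r (σ x) = Quot.mk r x := fun x =>
    (Quot.sound ((hr _ _).2 rfl)).symm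
  have hout : ∀ x, (Quot.mk r x).out = x ∨ (Quot.mk r x).out = σ x := fun x =>
    key x _ (Quot.out_eq _).symm
  have hbij : Function.Bijective (fun x => (Quot.mk r x, decide (x = (Quot.mk r x).out))) := by
    refine ⟨?_, ?_⟩
    · intro x y h
      simp only [Prod.mk.injEq, decide_eq_decide] at h
      obtain ⟨h1, h2⟩ := h
      have hx := hout x
      rw [← h1] at h2
      rcases key x y h1 with h | h
      · exact h.symm
      · rcases hx with hx | hx
        · rw [hx] at h2
          exact (h2.1 rfl).symm
        · rw [hx] at h2
          exact absurd (h2.2 h).symm (hf x)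
    · rintro ⟨q, b⟩
      cases b
      · refine ⟨σ q.out, ?_⟩
        have : Quot.mk r (σ q.out) = q := by rw [hs, Quot.out_eq]
        simp [this, hf]
      · exact ⟨q.out, by simp [Quot.out_eq]⟩
  refine ⟨Equiv.ofBijective _ hbij, fun x => ?_⟩
  simp only [Equiv.ofBijective_apply, hs, Prod.mk.injEq, true_and]
  rcases hout x with h | h <;> rw [h]
  · simp [hf]
  · simp [Ne.symm (hf x)]

lemma exists_equiv_fin_bool {X : Type} [Finite X] (σ : X → X) (hσ : ∀ x, σ (σ x) = x)
    (hf : ∀ x, σ x ≠ x) (a : ℕ) (ha : Nat.card X = 2 * a) :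
    ∃ e : X ≃ Fin a × Bool, ∀ x, e (σ x) = ((e x).1, !(e x).2) := by
  obtain ⟨e, he⟩ := exists_equiv_quot_bool σ hσ hf (fun x y => y = σ x) (fun _ _ => Iff.rfl)
  have hc := Nat.card_congr e
  rw [Nat.card_prod, ha] at hc
  rw [Nat.card_eq_fintype_card (α := Bool), Fintype.card_bool] at hc
  have hq : Nat.card (Quot fun x y => y = σ x) = a := by
    omega
  let e' : (Quot fun x y => y = σ x) ≃ Fin a := Finite.equivFinOfCardEq hq
  exact ⟨e.trans (e'.prodCongr (Equiv.refl _)), fun x => by simp [he]⟩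

/-- Counting half-edges: two for each edge and one for each leg. -/
lemma two_mul_numEdges_add {n : ℕ} (G : LeggedGraph n) :
    2 * G.numEdges + n = Nat.card G.H := by
  have hne : ∀ x : {h : G.H // G.ι h ≠ h}, G.ι (G.ι x.1) ≠ G.ι x.1 := fun x e =>
    x.2 (by rw [G.ι_invol] at e; exact e.symm)
  obtain ⟨e, -⟩ := exists_equiv_quot_bool (X := {h : G.H // G.ι h ≠ h})
    (fun x => ⟨G.ι x.1, hne x⟩)
    (fun x => Subtype.ext (G.ι_invol _)) (fun x hx => x.2 (congrArg Subtype.val hx))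
    (fun h h' => (h' : G.H) = G.ι (h : G.H)) (fun x y => by rw [Subtype.ext_iff])
  have h1 : Nat.card {h : G.H // G.ι h ≠ h} = G.numEdges * 2 := by
    rw [Nat.card_congr e, Nat.card_prod]
    simp [LeggedGraph.numEdges, LeggedGraph.Edge]
  have h2 : Nat.card {h : G.H // G.ι h = h} = n := by
    have : Function.Bijective (fun i : Fin n =>
        (⟨G.leg i, G.leg_fix i⟩ : {h : G.H // G.ι h = h})) :=
      ⟨fun i j h => G.leg_inj (congrArg Subtype.val h),
        fun h => (G.fix_leg h.1 h.2).imp fun i hi => Subtype.ext hi⟩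
    rw [← Nat.card_congr (Equiv.ofBijective _ this)]
    simp
  rw [← Nat.card_congr (Equiv.sumCompl fun h : G.H => G.ι h = h), Nat.card_sum, h2]
  have h3 : Nat.card {h : G.H // ¬ G.ι h = h} = G.numEdges * 2 := h1
  rw [h3]; ring

/-! ### Trivalent endpoint maps and elementary moves -/

/-- Connectedness of the graph with involution `ι` and endpoint map `ε`. Half-edges fixed by `ι`
only contribute reflexive pairs. -/
def Conn {H V : Type} (ι : H → H) (ε : H → V) : Prop :=
  ∀ a b, EqvGen (fun x y => ∃ h, ε h = x ∧ ε (ι h) = y) a b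

/-- Every vertex has valence three. -/
def Cubic {H V : Type} (ε : H → V) : Prop := ∀ v, Nat.card {h // ε h = v} = 3

/-- The elementary (Whitehead, or `IH`) move along the non-loop edge `{h, ι h}`: the half-edge `b`
at one end and the half-edge `c` at the other end exchange their endpoints. -/
def Move {H V : Type} (ι : H → H) (ε ε' : H → V) : Prop :=
  ∃ h b c, ε h ≠ ε (ι h) ∧ b ≠ h ∧ c ≠ ι h ∧ ε b = ε h ∧ ε c = ε (ι h) ∧
    ε' = ε ∘ Equiv.swap b c

/-- Two endpoint maps differ by a permutation of the vertices and an automorphism of `(H, ι)`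
that fixes every leaf. -/
def Relabel {H V : Type} (ι : H → H) (ε ε' : H → V) : Prop :=
  ∃ (fV : Equiv.Perm V) (fH : Equiv.Perm H), (∀ h, fH (ι h) = ι (fH h)) ∧
    (∀ h, ι h = h → fH h = h) ∧ ∀ h, ε' (fH h) = fV (ε h)

/-- One relabeling or one elementary move. -/
def Step {H V : Type} (ι : H → H) (ε ε' : H → V) : Prop := Relabel ι ε ε' ∨ Move ι ε ε'

/-- To push the connectedness relation forward along `s`, it is enough to do so for edges. -/
lemma Conn.map {H V W : Type} {ι : H → H} {ε : H → V} (hc : Conn ι ε) {R : W → W → Prop}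
    (s : V → W) (hs : ∀ h, EqvGen R (s (ε h)) (s (ε (ι h)))) (a b : V) :
    EqvGen R (s a) (s b) := by
  induction hc a b with
  | rel x y h => obtain ⟨k, rfl, rfl⟩ := h; exact hs k
  | refl x => exact .refl _
  | symm x y _ ih => exact .symm _ _ ih
  | trans x y z _ _ ih1 ih2 => exact .trans _ _ _ ih1 ih2

lemma Move.symm {H V : Type} {ι : H → H} {ε ε' : H → V}
    (hm : Move ι ε ε') : Move ι ε' ε := by
  obtain ⟨h, b, c, h1, hb, hc, eb, ec, rfl⟩ := hm
  have hb' : b ≠ ι h := by rintro rfl; exact h1 eb.symm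
  have hc' : c ≠ h := by rintro rfl; exact h1 ec
  have e1 : Equiv.swap b c h = h := Equiv.swap_apply_of_ne_of_ne hb.symm hc'.symm
  have e2 : Equiv.swap b c (ι h) = ι h := Equiv.swap_apply_of_ne_of_ne hb'.symm hc.symm
  refine ⟨h, c, b, ?_, hc', hb', ?_, ?_, ?_⟩
  · simpa [e1, e2] using h1
  · simpa [e1] using eb
  · simpa [e2] using ec
  · funext x; simp [Equiv.swap_comm c b]

lemma Relabel.symm {H V : Type} {ι : H → H} {ε ε' : H → V} (hm : Relabel ι ε ε') : Relabel ι ε' ε := by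
  obtain ⟨fV, fH, h1, h2, h3⟩ := hm
  refine ⟨fV.symm, fH.symm, fun h => ?_, fun h hh => ?_, fun h => ?_⟩
  · rw [Equiv.symm_apply_eq, h1, Equiv.apply_symm_apply]
  · rw [Equiv.symm_apply_eq, h2 h hh]
  · rw [Equiv.eq_symm_apply, ← h3, Equiv.apply_symm_apply]

lemma Step.symm {H V : Type} {ι : H → H} {ε ε' : H → V}
    (hm : Step ι ε ε') : Step ι ε' ε := hm.imp Relabel.symm Move.symm

lemma Cubic.comp {H V : Type} {ε ε' : H → V} (hc : Cubic ε) (fV : Equiv.Perm V)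
    (fH : Equiv.Perm H) (h : ∀ k, ε' (fH k) = fV (ε k)) : Cubic ε' := by
  intro v
  rw [← hc (fV.symm v)]
  refine (Nat.card_congr (fH.subtypeEquiv fun k => ?_)).symm
  rw [h, Equiv.eq_symm_apply]

/-- Steps preserve trivalence and connectedness. -/
lemma Step.good {H V : Type} {ι : H → H} {ε ε' : H → V}
    (hm : Step ι ε ε') (hg : Cubic ε ∧ Conn ι ε) : Cubic ε' ∧ Conn ι ε' := by
  obtain ⟨h3, hc⟩ := hg
  rcases hm with ⟨fV, fH, h1, h2, he⟩ | ⟨h, b, c, h1, hb, hc', eb, ec, rfl⟩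
  · refine ⟨h3.comp fV fH he, fun x y => ?_⟩
    have := hc.map (R := fun x y => ∃ h, ε' h = x ∧ ε' (ι h) = y) fV
      (fun k => .rel _ _ ⟨fH k, he k, by rw [← h1, he]⟩) (fV.symm x) (fV.symm y)
    simpa using this
  · refine ⟨h3.comp 1 (Equiv.swap b c) fun k => by simp, ?_⟩
    have hb' : b ≠ ι h := by rintro rfl; exact h1 eb.symm
    have hcc : c ≠ h := by rintro rfl; exact h1 ec
    have e1 : Equiv.swap b c h = h := Equiv.swap_apply_of_ne_of_ne hb.symm hcc.symm
    have e2 : Equiv.swap b c (ι h) = ι h := Equiv.swap_apply_of_ne_of_ne hb'.symm hc'.symm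
    have huv : EqvGen (fun x y => ∃ k, (ε ∘ Equiv.swap b c) k = x ∧ (ε ∘ Equiv.swap b c) (ι k) = y)
        (ε h) (ε (ι h)) := .rel _ _ ⟨h, by simp [e1], by simp [e2]⟩
    -- a half-edge keeps its endpoint, up to the edge along which the move takes place
    have hk : ∀ k, EqvGen (fun x y => ∃ k, (ε ∘ Equiv.swap b c) k = x ∧
        (ε ∘ Equiv.swap b c) (ι k) = y) (ε k) ((ε ∘ Equiv.swap b c) k) := by
      intro k
      by_cases hkb : k = b
      · subst hkb; simpa [eb, ec] using huv
      by_cases hkc : k = c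
      · subst hkc; simpa [eb, ec] using huv.symm
      simpa [Equiv.swap_apply_of_ne_of_ne hkb hkc] using EqvGen.refl _
    refine hc.map id fun k => ?_
    exact ((hk k).trans _ _ _ (.rel _ _ ⟨k, rfl, rfl⟩)).trans _ _ _ (hk (ι k)).symm

lemma eqvGen_step_good {H V : Type} {ι : H → H} {ε ε' : H → V}
    (hm : EqvGen (Step ι) ε ε') : (Cubic ε ∧ Conn ι ε) ↔ (Cubic ε' ∧ Conn ι ε') := by
  induction hm with
  | rel x y h => exact ⟨h.good, h.symm.good⟩
  | refl x => exact Iff.rfl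
  | symm x y _ ih => exact ih.symm
  | trans x y z _ _ ih1 ih2 => exact ih1.trans ih2

/-- In a connected graph there is a height function (the distance to the root `r`) that can be
decreased along an edge at every vertex other than `r`. -/
lemma Conn.exists_height {H V : Type} {ι : H → H} {ε : H → V} (hι : ∀ h, ι (ι h) = h)
    (hc : Conn ι ε) (r : V) :
    ∃ f : V → ℕ, ∀ v, v ≠ r → ∃ h, ε h = v ∧ f (ε (ι h)) < f v := by
  let R : ℕ → V → Prop := fun k => Nat.rec (motive := fun _ => V → Prop) (fun v => v = r)
    (fun _ P v => ∃ h, ε h = v ∧ P (ε (ι h))) k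
  have hR : ∀ v, ∃ k, R k v := by
    intro v
    have : ∀ a b, EqvGen (fun x y => ∃ h, ε h = x ∧ ε (ι h) = y) a b →
        ((∃ k, R k a) ↔ ∃ k, R k b) := by
      intro a b hab
      induction hab with
      | rel x y h =>
        obtain ⟨h, rfl, rfl⟩ := h
        exact ⟨fun ⟨k, hk⟩ => ⟨k + 1, ι h, rfl, by rwa [hι]⟩, fun ⟨k, hk⟩ => ⟨k + 1, h, rfl, hk⟩⟩
      | refl x => exact Iff.rfl
      | symm x y _ ih => exact ih.symm
      | trans x y z _ _ ih1 ih2 => exact ih1.trans ih2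
    exact (this r v (hc r v)).1 ⟨0, rfl⟩
  refine ⟨fun v => Nat.find (hR v), fun v hv => ?_⟩
  have h1 : R (Nat.find (hR v)) v := Nat.find_spec (hR v)
  rcases hk : Nat.find (hR v) with _ | k
  · rw [hk] at h1; exact absurd h1 hv
  · rw [hk] at h1
    obtain ⟨h, e, h2⟩ := h1
    exact ⟨h, e, (Nat.lt_succ_of_le (Nat.find_min' _ h2)).trans_eq hk.symm⟩

lemma Cubic.exists_third {H V : Type} {ε : H → V} (h3 : Cubic ε) (v : V) (a b : H) :
    ∃ c, ε c = v ∧ c ≠ a ∧ c ≠ b := by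
  by_contra! hcon
  have hsub : {h | ε h = v} ⊆ ({a, b} : Set H) := by
    intro c hc
    by_cases hca : c = a
    · exact Or.inl hca
    · exact Or.inr (hcon c hc hca)
  have h1 := Set.ncard_le_ncard hsub (Set.toFinite _)
  have h2 : ({a, b} : Set H).ncard ≤ 2 := (Set.ncard_insert_le a {b}).trans (by simp)
  have h4 : Set.ncard {h | ε h = v} = 3 := h3 v
  omega

/-- Two leaves `l₁`, `l₂` can be brought to the same vertex. The function `f` plays the role of the
distance to the vertex of `l₂`: an elementary move along an edge that decreases `f` carries `l₁` one
step closer, and keeps a descending half-edge at all vertices not higher than the new vertex of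
`l₁`. -/
lemma exists_cherry {H V : Type} {ι : H → H}
    (l₁ l₂ : H) (hl₁ : ι l₁ = l₁) (hl₂ : ι l₂ = l₂) (hl : l₁ ≠ l₂) (f : V → ℕ) :
    ∀ (N : ℕ) (ε : H → V), Cubic ε → Conn ι ε → f (ε l₁) = N →
      (∀ v, f v ≤ N → v ≠ ε l₂ → ∃ h, ε h = v ∧ f (ε (ι h)) < f v) →
      ∃ ε', EqvGen (Step ι) ε ε' ∧ ε' l₁ = ε' l₂ := by
  intro N
  induction N using Nat.strong_induction_on with
  | _ N ih =>
  intro ε h3 hc hN hf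
  by_cases h12 : ε l₁ = ε l₂
  · exact ⟨ε, .refl _, h12⟩
  obtain ⟨h, hh, hlt⟩ := hf (ε l₁) hN.le h12
  have hne : ε h ≠ ε (ι h) := fun e => by rw [← e, hh] at hlt; omega
  have hl1h : l₁ ≠ h := by rintro rfl; rw [hl₁] at hne; exact hne rfl
  -- `d` is the half-edge at the far end of the edge that must keep its place
  obtain ⟨d, hd⟩ : ∃ d, (ε (ι h) = ε l₂ ∧ d = l₂) ∨
      (ε (ι h) ≠ ε l₂ ∧ ε d = ε (ι h) ∧ f (ε (ι d)) < f (ε (ι h))) := by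
    by_cases hu : ε (ι h) = ε l₂
    · exact ⟨l₂, Or.inl ⟨hu, rfl⟩⟩
    · obtain ⟨d, hd⟩ := hf (ε (ι h)) (by omega) hu
      exact ⟨d, Or.inr ⟨hu, hd⟩⟩
  obtain ⟨c, ec, hc1, hc2⟩ := h3.exists_third (ε (ι h)) (ι h) d
  have hmove : Step ι ε (ε ∘ Equiv.swap l₁ c) :=
    Or.inr ⟨h, l₁, c, hne, hl1h, hc1, hh.symm, ec, rfl⟩
  have hcl2 : c ≠ l₂ := by
    rintro rfl
    rcases hd with ⟨_, rfl⟩ | ⟨hu, _⟩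
    · exact hc2 rfl
    · exact hu ec.symm
  have e1 : (ε ∘ Equiv.swap l₁ c) l₁ = ε (ι h) := by simp [ec]
  have e2 : (ε ∘ Equiv.swap l₁ c) l₂ = ε l₂ := by
    simp [Equiv.swap_apply_of_ne_of_ne hl.symm hcl2.symm]
  have hkeep : ∀ k, k ≠ l₁ → k ≠ c → (ε ∘ Equiv.swap l₁ c) k = ε k := fun k a b => by
    simp [Equiv.swap_apply_of_ne_of_ne a b]
  rcases hd with ⟨hu, rfl⟩ | ⟨hu, ed, hdlt⟩
  · exact ⟨_, .rel _ _ hmove, by rw [e1, e2, hu]⟩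
  · obtain ⟨g3, gc⟩ := hmove.good ⟨h3, hc⟩
    obtain ⟨ε', hε', he⟩ := ih _ (hN ▸ hlt) (ε ∘ Equiv.swap l₁ c) g3 gc (by rw [e1]) (by
      intro v hv hv2
      rw [e2] at hv2
      have hval : ∀ k, f (ε k) < f (ε (ι h)) → (ε ∘ Equiv.swap l₁ c) k = ε k := by
        intro k hk
        refine hkeep k ?_ ?_
        · rintro rfl; omega
        · rintro rfl; rw [ec] at hk; omega
      by_cases hvu : v = ε (ι h)
      · subst hvu
        refine ⟨d, ?_, ?_⟩
        · rw [hkeep d ?_ hc2.symm, ed]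
          rintro rfl
          rw [ed] at hlt; omega
        · rw [hval _ hdlt]; exact hdlt
      · obtain ⟨k, hk, hklt⟩ := hf v (by omega) hv2
        refine ⟨k, ?_, ?_⟩
        · rw [hkeep k ?_ ?_, hk]
          · rintro rfl; rw [hk] at hlt; omega
          · rintro rfl; exact hvu (hk ▸ ec)
        · rw [hval _ (by omega)]; exact hklt)
    exact ⟨ε', .trans _ _ _ (.rel _ _ hmove) hε', he⟩

/-! ### Removing a cherry from a tree -/

/-- The involution left on the half-edges outside `D`: a half-edge whose partner lies in `D`
becomes a leaf. -/
noncomputable def cutInv {H : Type} (ι : H → H) (D : H → Prop) (k : {k // ¬ D k}) : {k // ¬ D k} :=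
  if hk : D (ι k.1) then k else ⟨ι k.1, hk⟩

/-- Extension of an endpoint map by sending every half-edge of `D` to the vertex `v`. -/
noncomputable def extEnd {H V : Type} (D : H → Prop) (v : V) (e : {k // ¬ D k} → {x : V // x ≠ v})
    (k : H) : V :=
  if hk : D k then v else (e ⟨k, hk⟩).1

lemma cutInv_of {H : Type} {ι : H → H} {D : H → Prop} (k : {k // ¬ D k}) (hk : D (ι k.1)) :
    cutInv ι D k = k := dif_pos hk

lemma cutInv_of_not {H : Type} {ι : H → H} {D : H → Prop} (k : {k // ¬ D k}) (hk : ¬ D (ι k.1)) :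
    cutInv ι D k = ⟨ι k.1, hk⟩ := dif_neg hk

lemma extEnd_of {H V : Type} {D : H → Prop} {v : V} (e : {k // ¬ D k} → {x : V // x ≠ v})
    (k : H) (hk : D k) : extEnd D v e k = v := dif_pos hk

lemma extEnd_of_not {H V : Type} {D : H → Prop} {v : V} (e : {k // ¬ D k} → {x : V // x ≠ v})
    (k : H) (hk : ¬ D k) : extEnd D v e k = (e ⟨k, hk⟩).1 := dif_neg hk

lemma cutInv_invol {H : Type} {ι : H → H} (hι : ∀ h, ι (ι h) = h) (D : H → Prop)
    (k : {k // ¬ D k}) : cutInv ι D (cutInv ι D k) = k := by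
  by_cases hk : D (ι k.1)
  · rw [cutInv_of k hk, cutInv_of k hk]
  · rw [cutInv_of_not k hk, cutInv_of_not]
    · exact Subtype.ext (hι _)
    · simpa [hι] using k.2

lemma comp_swap {H V : Type} (ε : H → V) (b c : H) :
    (ε ∘ Equiv.swap b c) b = ε c ∧ (ε ∘ Equiv.swap b c) c = ε b ∧
      ∀ k, k ≠ b → k ≠ c → (ε ∘ Equiv.swap b c) k = ε k :=
  ⟨by simp, by simp, fun k h1 h2 => by simp [Equiv.swap_apply_of_ne_of_ne h1 h2]⟩

/-- Steps of the graph cut along `D` extend to the whole graph. The hypothesis `hD` says that no edge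
has both halves in `D`, so that every edge meeting `D` leaves a leaf of `cutInv ι D`; since
relabelings fix leaves, they extend by the identity. -/
lemma Step.ext {H V : Type} {ι : H → H} (hι : ∀ h, ι (ι h) = h) {D : H → Prop}
    (hD : ∀ k, D k → ι k = k ∨ ¬ D (ι k)) (v : V) {e e' : {k // ¬ D k} → {x : V // x ≠ v}}
    (hs : Step (cutInv ι D) e e') : Step ι (extEnd D v e) (extEnd D v e') := by
  rcases hs with ⟨fV, fH, h1, h2, he⟩ | ⟨h, b, c, h1, hb, hc', eb, ec, rfl⟩
  · left
    have hin : ∀ k, D k → Equiv.Perm.ofSubtype fH k = k := fun k hk =>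
      Equiv.Perm.ofSubtype_apply_of_not_mem _ (not_not.2 hk)
    have hout : ∀ k (hk : ¬ D k), Equiv.Perm.ofSubtype fH k = (fH ⟨k, hk⟩).1 := fun k hk =>
      Equiv.Perm.ofSubtype_apply_of_mem (p := fun k => ¬ D k) fH hk
    refine ⟨Equiv.Perm.ofSubtype fV, Equiv.Perm.ofSubtype fH, fun k => ?_, fun k hk => ?_,
      fun k => ?_⟩
    · by_cases hk : D k
      · rw [hin k hk]
        rcases hD k hk with h | h
        · rw [h, hin k hk]
        · rw [hout _ h, h2 _ (cutInv_of _ (by simpa [hι] using hk))]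
      · rw [hout k hk]
        by_cases hk' : D (ι k)
        · rw [hin _ hk', h2 _ (cutInv_of _ hk')]
        · have h3 := h1 ⟨k, hk⟩
          rw [cutInv_of_not _ hk'] at h3
          rw [hout _ hk', h3]
          by_cases hy : D (ι (fH ⟨k, hk⟩).1)
          · exfalso
            have h4 := h2 _ (cutInv_of _ hy)
            rw [fH.injective h4] at hy
            exact hk' hy
          · rw [cutInv_of_not _ hy]
    · by_cases hk' : D k
      · exact hin k hk'
      · rw [hout k hk', h2]
        rw [cutInv_of_not _ (by rwa [hk])]
        exact Subtype.ext hk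
    · by_cases hk : D k
      · rw [hin k hk, extEnd_of _ _ hk, extEnd_of _ _ hk,
          Equiv.Perm.ofSubtype_apply_of_not_mem _ (by simp)]
      · rw [hout k hk, extEnd_of_not _ _ (fH ⟨k, hk⟩).2, extEnd_of_not _ _ hk,
          Equiv.Perm.ofSubtype_apply_coe, ← he]
  · right
    have hk : ¬ D (ι h.1) := fun hk => h1 (by rw [cutInv_of _ hk])
    rw [cutInv_of_not _ hk] at h1 hc' ec
    refine ⟨h.1, b.1, c.1, ?_, fun h => hb (Subtype.ext h), fun h => hc' (Subtype.ext h), ?_, ?_, ?_⟩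
    · rw [extEnd_of_not _ _ h.2, extEnd_of_not _ _ hk]
      exact fun h => h1 (Subtype.ext h)
    · rw [extEnd_of_not _ _ h.2, extEnd_of_not _ _ b.2, eb]
    · rw [extEnd_of_not _ _ hk, extEnd_of_not _ _ c.2, ec]
    · obtain ⟨s1, s2, s3⟩ := comp_swap e b c
      obtain ⟨t1, t2, t3⟩ := comp_swap (extEnd D v e) b.1 c.1
      funext k
      by_cases hkD : D k
      · rw [extEnd_of _ _ hkD, t3, extEnd_of _ _ hkD]
        · rintro rfl; exact b.2 hkD
        · rintro rfl; exact c.2 hkD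
      · rw [extEnd_of_not _ _ hkD]
        by_cases hkb : k = b.1
        · subst hkb
          rw [t1, s1, extEnd_of_not _ _ c.2]
        by_cases hkc : k = c.1
        · subst hkc
          rw [t2, s2, extEnd_of_not _ _ b.2]
        rw [t3 _ hkb hkc, extEnd_of_not _ _ hkD, s3 _ (fun h => hkb (congrArg Subtype.val h))
            (fun h => hkc (congrArg Subtype.val h))]

/-- The three half-edges at the vertex of a cherry: two leaves and a third one, which leads to a
different vertex. -/
lemma exists_stem {H V : Type} {ι : H → H} (hι : ∀ h, ι (ι h) = h) {ε : H → V} (h3 : Cubic ε)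
    (hc : Conn ι ε)
    {l₁ l₂ : H} (hl₁ : ι l₁ = l₁) (hl₂ : ι l₂ = l₂) (hl : l₁ ≠ l₂) (h12 : ε l₁ = ε l₂)
    (hV : ∃ u, u ≠ ε l₁) :
    ∃ h, ε (ι h) ≠ ε l₁ ∧ ∀ k, ε k = ε l₁ ↔ (k = l₁ ∨ k = l₂ ∨ k = h) := by
  obtain ⟨h, hh, h1, h2⟩ := h3.exists_third (ε l₁) l₁ l₂
  have hall : ∀ k, ε k = ε l₁ ↔ (k = l₁ ∨ k = l₂ ∨ k = h) := by
    intro k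
    refine ⟨fun hk => ?_, ?_⟩
    · by_contra! hcon
      have hsub : ({k, l₁, l₂, h} : Set H) ⊆ {h | ε h = ε l₁} := by
        rintro x (rfl | rfl | rfl | rfl)
        exacts [hk, rfl, h12.symm, hh]
      have h4 : Set.ncard {h | ε h = ε l₁} = 3 := h3 (ε l₁)
      have h5 := Set.ncard_le_ncard hsub (Set.finite_of_ncard_ne_zero (by omega))
      have h6 : ({k, l₁, l₂, h} : Set H).ncard = 4 := by
        rw [Set.ncard_insert_of_notMem (by simp [hcon]),
          Set.ncard_insert_of_notMem (by simp [hl, h1.symm]), Set.ncard_pair h2.symm]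
      omega
    · rintro (rfl | rfl | rfl)
      exacts [rfl, h12.symm, hh]
  refine ⟨h, fun hcon => ?_, hall⟩
  obtain ⟨u, hu⟩ := hV
  -- otherwise the vertex of the cherry would be a whole connected component
  have : EqvGen (fun P Q : Prop => P = Q) (u = ε l₁) (ε l₁ = ε l₁) := by
    refine hc.map (fun x => x = ε l₁) (fun k => .rel _ _ (propext ?_)) u (ε l₁)
    have hcl : ∀ k, ε k = ε l₁ → ε (ι k) = ε l₁ := by
      intro k hk
      rcases (hall k).1 hk with rfl | rfl | rfl
      · rw [hl₁]
      · rw [hl₂, h12]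
      · exact hcon
    refine ⟨hcl k, fun hk => ?_⟩
    have := hcl _ hk
    rwa [hι] at this
  have heq : ∀ P Q : Prop, EqvGen (fun P Q : Prop => P = Q) P Q → P = Q := by
    intro P Q h
    induction h with
    | rel _ _ h => exact h
    | refl _ => rfl
    | symm _ _ _ ih => exact ih.symm
    | trans _ _ _ _ _ ih1 ih2 => exact ih1.trans ih2
  exact hu ((heq _ _ this).mpr rfl)

lemma eqvGen_ext {H V : Type} {ι : H → H} (hι : ∀ h, ι (ι h) = h) {D : H → Prop}
    (hD : ∀ k, D k → ι k = k ∨ ¬ D (ι k)) (v : V) {e e' : {k // ¬ D k} → {x : V // x ≠ v}}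
    (hs : EqvGen (Step (cutInv ι D)) e e') :
    EqvGen (Step ι) (extEnd D v e) (extEnd D v e') := by
  induction hs with
  | rel _ _ h => exact .rel _ _ (h.ext hι hD v)
  | refl _ => exact .refl _
  | symm _ _ _ ih => exact ih.symm
  | trans _ _ _ _ _ ih1 ih2 => exact ih1.trans _ _ _ ih2

/-- Restriction of an endpoint map to the half-edges away from a vertex `v`. -/
def resEnd {H V : Type} (D : H → Prop) (v : V) (ε : H → V) (hv : ∀ k, ε k = v ↔ D k) :
    {k // ¬ D k} → {x : V // x ≠ v} := fun k => ⟨ε k.1, fun h => k.2 ((hv _).1 h)⟩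

lemma extEnd_resEnd {H V : Type} (D : H → Prop) (v : V) (ε : H → V) (hv : ∀ k, ε k = v ↔ D k) :
    extEnd D v (resEnd D v ε hv) = ε := by
  funext k
  by_cases hk : D k
  · rw [extEnd_of _ _ hk, (hv k).2 hk]
  · rw [extEnd_of_not _ _ hk]; rfl

lemma resEnd_cubic {H V : Type} {D : H → Prop} {v : V} {ε : H → V} (hv : ∀ k, ε k = v ↔ D k)
    (h3 : Cubic ε) : Cubic (resEnd D v ε hv) := by
  intro x
  rw [← h3 x.1]
  refine Nat.card_congr ⟨fun k => ⟨k.1.1, congrArg Subtype.val k.2⟩,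
    fun k => ⟨⟨k.1, fun hk => x.2 (by rw [← k.2, (hv _).2 hk])⟩, Subtype.ext k.2⟩,
    fun k => rfl, fun k => rfl⟩

lemma resEnd_conn {H V : Type} {ι : H → H} (hι : ∀ h, ι (ι h) = h) {D : H → Prop} {v : V}
    {ε : H → V} (hv : ∀ k, ε k = v ↔ D k) (h : H)
    (hD : ∀ k, D k → ι k = k ∨ k = h) (hDh : ¬ D (ι h)) (hc : Conn ι ε) :
    Conn (cutInv ι D) (resEnd D v ε hv) := by
  have hu : ε (ι h) ≠ v := fun e => hDh ((hv _).1 e)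
  -- collapse the removed vertex to the far end of the stem
  let π : V → {x : V // x ≠ v} := fun x => if hx : x = v then ⟨ε (ι h), hu⟩ else ⟨x, hx⟩
  have hπ : ∀ x : {x : V // x ≠ v}, π x.1 = x := fun x => dif_neg x.2
  have hπv : π v = ⟨ε (ι h), hu⟩ := dif_pos rfl
  have hπu : π (ε (ι h)) = ⟨ε (ι h), hu⟩ := dif_neg hu
  have hDπ : ∀ k, D k → π (ε k) = π (ε (ι k)) := by
    intro k hk
    rcases hD k hk with e | rfl
    · rw [e]
    · rw [(hv k).2 hk, hπv, hπu]
  intro x y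
  rw [← hπ x, ← hπ y]
  refine hc.map π (fun k => ?_) x.1 y.1
  by_cases hk : D k
  · rw [hDπ k hk]; exact .refl _
  by_cases hk' : D (ι k)
  · have := hDπ _ hk'
    rw [hι] at this
    rw [this]; exact .refl _
  · refine .rel _ _ ⟨⟨k, hk⟩, ?_, ?_⟩
    · exact (hπ (resEnd D v ε hv ⟨k, hk⟩)).symm
    · rw [cutInv_of_not _ hk']
      exact (hπ (resEnd D v ε hv ⟨ι k, hk'⟩)).symm

/-- Any half-edge of an edge can be carried to any other one by an automorphism of `(H, ι)` that
fixes the leaves. -/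
lemma exists_perm_map {H : Type} {ι : H → H} (hι : ∀ h, ι (ι h) = h) {h h' : H}
    (hh : ι h ≠ h) (hh' : ι h' ≠ h') :
    ∃ σ : Equiv.Perm H, (∀ k, σ (ι k) = ι (σ k)) ∧ (∀ k, ι k = k → σ k = k) ∧ σ h = h' := by
  have hinj : Function.Injective ι := Function.Involutive.injective hι
  by_cases h1 : h' = h
  · subst h1
    exact ⟨1, by simp, by simp, by simp⟩
  by_cases h2 : h' = ι h
  · subst h2
    exact ⟨Function.Involutive.toPerm ι hι, fun k => rfl, fun k hk => hk, rfl⟩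
  have h3 : ι h' ≠ h := fun e => h2 (by rw [← e, hι])
  have h4 : ι h' ≠ ι h := fun e => h1 (hinj e)
  refine ⟨Equiv.swap h h' * Equiv.swap (ι h) (ι h'), fun k => ?_, fun k hk => ?_, ?_⟩
  · simp only [Equiv.Perm.mul_apply, Equiv.swap_apply_def]
    have e1 : ∀ a b, ι a = b ↔ a = ι b := fun a b =>
      ⟨fun e => by rw [← e, hι], fun e => by rw [e, hι]⟩
    by_cases a1 : k = h
    · subst a1; simp [*, Ne.symm hh, Ne.symm h3]
    by_cases a2 : k = h'
    · subst a2; simp [*, Ne.symm hh', Ne.symm h3]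
    by_cases a3 : k = ι h
    · subst a3; simp [*, Ne.symm hh, Ne.symm h3]
    by_cases a4 : k = ι h'
    · subst a4; simp [*, Ne.symm hh', Ne.symm h3]
    simp [e1, hι, a1, a2, a3, a4]
  · have n1 : k ≠ h := by rintro rfl; exact hh hk
    have n2 : k ≠ h' := by rintro rfl; exact hh' hk
    have n3 : k ≠ ι h := by rintro rfl; exact hh (hinj hk)
    have n4 : k ≠ ι h' := by rintro rfl; exact hh' (hinj hk)
    rw [Equiv.Perm.mul_apply, Equiv.swap_apply_of_ne_of_ne n3 n4, Equiv.swap_apply_of_ne_of_ne n1 n2]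
  · rw [Equiv.Perm.mul_apply, Equiv.swap_apply_of_ne_of_ne hh.symm h3.symm, Equiv.swap_apply_left]

/-- A cherry with leaves `l₁`, `l₂` can be brought to any vertex `v'`, with any given half-edge `h'`
of an edge as its stem. -/
lemma exists_align {H V : Type} {ι : H → H} (hι : ∀ h, ι (ι h) = h) {ε : H → V} {l₁ l₂ h h' : H}
    (hl₁ : ι l₁ = l₁) (hl₂ : ι l₂ = l₂) {v : V} (v' : V)
    (hh : ι h ≠ h) (hh' : ι h' ≠ h')
    (hv : ∀ k, ε k = v ↔ (k = l₁ ∨ k = l₂ ∨ k = h)) :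
    ∃ ε'', Step ι ε ε'' ∧ ∀ k, ε'' k = v' ↔ (k = l₁ ∨ k = l₂ ∨ k = h') := by
  obtain ⟨σ, h1, h2, h3⟩ := exists_perm_map hι hh hh'
  refine ⟨fun k => Equiv.swap v v' (ε (σ.symm k)), Or.inl ⟨Equiv.swap v v', σ, h1, h2,
    fun k => by simp⟩, fun k => ?_⟩
  have : Equiv.swap v v' (ε (σ.symm k)) = v' ↔ ε (σ.symm k) = v := by
    rw [Equiv.swap_apply_eq_iff, Equiv.swap_apply_right]
  rw [this, hv, Equiv.symm_apply_eq, Equiv.symm_apply_eq, Equiv.symm_apply_eq, h2 _ hl₁, h2 _ hl₂,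
    h3]

/-- **Trivalent trees.** Any two connected trivalent endpoint maps on the same half-edges with at
least `|V| + 2` leaves (so that both graphs are trees) are joined by elementary moves and
relabelings that fix the leaves. Two leaves are brought together in both trees, and the resulting
cherry is removed; its stem becomes a leaf. -/
theorem tree_connected (m : ℕ) : ∀ (H V : Type) [Finite V] (ι : H → H),
    (∀ h, ι (ι h) = h) → Nat.card V = m + 1 → ∀ F : Finset H, (∀ k ∈ F, ι k = k) →
    m + 3 ≤ F.card → ∀ ε ε' : H → V, (Cubic ε ∧ Conn ι ε) → (Cubic ε' ∧ Conn ι ε') →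
    EqvGen (Step ι) ε ε' := by
  induction m with
  | zero =>
    intro H V _ ι _ hV F _ _ ε ε' _ _
    have : Subsingleton V := (Nat.card_eq_one_iff_unique.1 hV).1
    rw [Subsingleton.elim ε ε']
    exact .refl _
  | succ m ih =>
    intro H V _ ι hι hV F hF hFc ε ε' hg hg'
    obtain ⟨l₁, hl₁F, l₂, hl₂F, hl⟩ := Finset.one_lt_card.1 (show 1 < F.card by omega)
    have hl₁ := hF _ hl₁F
    have hl₂ := hF _ hl₂F
    have hV2 : ∀ v : V, ∃ u, u ≠ v := by
      have : Nontrivial V := Finite.one_lt_card_iff_nontrivial.1 (by omega)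
      exact exists_ne
    have cherry : ∀ ε : H → V, (Cubic ε ∧ Conn ι ε) → ∃ ε₁ h, EqvGen (Step ι) ε ε₁ ∧
        (Cubic ε₁ ∧ Conn ι ε₁) ∧ ε₁ (ι h) ≠ ε₁ l₁ ∧
        ∀ k, ε₁ k = ε₁ l₁ ↔ (k = l₁ ∨ k = l₂ ∨ k = h) := by
      intro ε hg
      obtain ⟨f, hf⟩ := hg.2.exists_height hι (ε l₂)
      obtain ⟨ε₁, h1, h2⟩ := exists_cherry l₁ l₂ hl₁ hl₂ hl f _ ε hg.1 hg.2 rfl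
        (fun v _ hv => hf v hv)
      have hg₁ := (eqvGen_step_good h1).1 hg
      obtain ⟨h, h3, h4⟩ := exists_stem hι hg₁.1 hg₁.2 hl₁ hl₂ hl h2 (hV2 _)
      exact ⟨ε₁, h, h1, hg₁, h3, h4⟩
    obtain ⟨ε₁, h₁, hs₁, hg₁, hne₁, hv₁⟩ := cherry ε hg
    obtain ⟨ε₂, h, hs₂, hg₂, hne₂, hv₂⟩ := cherry ε' hg'
    have stem_ne : ∀ (ε : H → V) (h : H), ε (ι h) ≠ ε l₁ →
        (∀ k, ε k = ε l₁ ↔ (k = l₁ ∨ k = l₂ ∨ k = h)) → ι h ≠ h := by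
      intro ε h h1 h2 e
      rw [e] at h1
      exact h1 ((h2 h).2 (by simp))
    have hh := stem_ne _ _ hne₂ hv₂
    obtain ⟨ε₃, hs₃, hv₃⟩ := exists_align hι hl₁ hl₂ (ε₂ l₁) (stem_ne _ _ hne₁ hv₁) hh hv₁
    have hg₃ := hs₃.good hg₁
    refine hs₁.trans _ _ _ (.trans _ _ _ (.rel _ _ hs₃) (.trans _ _ _ ?_ hs₂.symm))
    -- both maps now agree on the cherry, and removing it leaves smaller trees
    set v := ε₂ l₁
    let D : H → Prop := fun k => k = l₁ ∨ k = l₂ ∨ k = h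
    have hDh : ¬ D (ι h) := fun hd => hne₂ ((hv₂ _).2 hd)
    have hD' : ∀ k, D k → ι k = k ∨ k = h := by
      rintro k (rfl | rfl | rfl)
      exacts [Or.inl hl₁, Or.inl hl₂, Or.inr rfl]
    have hD : ∀ k, D k → ι k = k ∨ ¬ D (ι k) := fun k hk =>
      (hD' k hk).imp id (by rintro rfl; exact hDh)
    rw [← extEnd_resEnd D v ε₃ hv₃, ← extEnd_resEnd D v ε₂ hv₂]
    refine eqvGen_ext hι hD v ?_
    have hF' : ∀ k ∈ insert (ι h) ((F.erase l₁).erase l₂), ¬ D k := by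
      intro k hk
      rw [Finset.mem_insert, Finset.mem_erase, Finset.mem_erase] at hk
      rcases hk with rfl | ⟨h1, h2, h3⟩
      · exact hDh
      · rintro (rfl | rfl | rfl)
        exacts [h2 rfl, h1 rfl, hh (hF _ h3)]
    refine ih {k // ¬ D k} {x // x ≠ v} (cutInv ι D) (cutInv_invol hι D) ?_
      ((insert (ι h) ((F.erase l₁).erase l₂)).subtype fun k => ¬ D k) ?_ ?_ _ _
      ⟨resEnd_cubic hv₃ hg₃.1, resEnd_conn hι hv₃ h hD' hDh hg₃.2⟩
      ⟨resEnd_cubic hv₂ hg₂.1, resEnd_conn hι hv₂ h hD' hDh hg₂.2⟩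
    · have e := Nat.card_congr (Equiv.sumCompl fun x : V => x = v)
      rw [Nat.card_sum, hV] at e
      have e2 : Nat.card {x : V // x = v} = 1 := by simp
      have e3 : Nat.card {x : V // ¬ x = v} = Nat.card {x : V // x ≠ v} := rfl
      omega
    · intro k hk
      rw [Finset.mem_subtype, Finset.mem_insert, Finset.mem_erase, Finset.mem_erase] at hk
      rcases hk with e | ⟨_, _, h3⟩
      · refine cutInv_of _ ?_
        rw [e, hι]; exact Or.inr (Or.inr rfl)
      · have e := hF _ h3
        rw [cutInv_of_not _ (by rw [e]; exact k.2)]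
        exact Subtype.ext e
    · rw [Finset.card_subtype, Finset.filter_true_of_mem hF', Finset.card_insert_of_notMem,
        Finset.card_erase_of_mem, Finset.card_erase_of_mem hl₁F]
      · omega
      · exact Finset.mem_erase.2 ⟨hl.symm, hl₂F⟩
      · rw [Finset.mem_erase, Finset.mem_erase]
        rintro ⟨_, _, h3⟩
        have := hF _ h3
        rw [hι] at this
        exact hh this.symm

/-! ### Weighted contractions of one edge -/

section Graphs

variable {n : ℕ}

lemma conn_of_isConnected {G : LeggedGraph n} (h : G.IsConnected) : Conn G.ι G.ε := fun a b =>
  (h a b).mono fun _ _ ⟨k, _, h1, h2⟩ => ⟨k, h1, h2⟩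

lemma isConnected_of_conn {G : LeggedGraph n} (h : Conn G.ι G.ε) : G.IsConnected := by
  refine fun a b => h.map id (fun k => ?_) a b
  by_cases hk : G.ι k = k
  · rw [hk]; exact .refl _
  · exact .rel _ _ ⟨k, hk, rfl, rfl⟩

lemma numComps_eq_one (G : LeggedGraph n) (h : G.IsConnected) : G.numComps = 1 := by
  have : Subsingleton (Quot G.adjRel) := ⟨fun a b => by
    induction a using Quot.ind
    induction b using Quot.ind
    exact Quot.eqvGen_sound (h _ _)⟩
  have : Nonempty (Quot G.adjRel) := G.neV.map (Quot.mk _)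
  exact Nat.card_eq_one_iff_unique.2 ⟨inferInstance, inferInstance⟩

lemma fiber_isConnected (G : LeggedGraph n) (S : Set G.H) (x : Quot (G.contrRel S)) :
    (G.fiber S x).IsConnected := by
  have key : ∀ a b, EqvGen (G.contrRel S) a b →
      ∀ (ha : Quot.mk (G.contrRel S) a = x) (hb : Quot.mk (G.contrRel S) b = x),
      EqvGen (G.fiber S x).adjRel ⟨a, ha⟩ ⟨b, hb⟩ := by
    intro a b h
    induction h with
    | rel a b h =>
      intro ha hb
      obtain ⟨k, hk, rfl, rfl⟩ := h
      exact .rel _ _ ⟨⟨k, hk, ha⟩, fun e => hk.2 (congrArg Subtype.val e), rfl, rfl⟩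
    | refl a => exact fun _ _ => .refl _
    | symm a b _ ih => exact fun ha hb => (ih hb ha).symm
    | trans a b c h _ ih1 ih2 => 
      intro ha hc
      have hb : Quot.mk (G.contrRel S) b = x := by rw [← ha]; exact (Quot.eqvGen_sound h).symm
      exact (ih1 ha hb).trans _ _ _ (ih2 hb hc)
  rintro ⟨a, ha⟩ ⟨b, hb⟩
  exact key a b (Quot.eqvGen_exact (ha.trans hb.symm)) ha hb

lemma mem_sym_singleton {G : LeggedGraph n} {h₀ : G.H} (h0 : G.ι h₀ ≠ h₀) (k : G.H) :
    k ∈ G.sym {h₀} ↔ k = h₀ ∨ k = G.ι h₀ := by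
  have e : G.ι k = h₀ ↔ k = G.ι h₀ :=
    ⟨fun e => by rw [← e, G.ι_invol], fun e => by rw [e, G.ι_invol]⟩
  constructor
  · rintro ⟨h | h, _⟩
    · exact Or.inl h
    · exact Or.inr (e.1 h)
  · rintro (rfl | rfl)
    · exact ⟨Or.inl rfl, h0⟩
    · refine ⟨Or.inr (G.ι_invol _), ?_⟩
      rw [G.ι_invol]; exact h0.symm

lemma wcontract_zero (G : LeggedGraph n) (S : Set G.H) (x : Quot (G.contrRel S)) :
    G.wcontract (fun _ => 0) S x = (G.fiber S x).b1 := by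
  unfold LeggedGraph.wcontract
  rw [finsum_zero, add_zero]

lemma card_fiber_H_le (G : LeggedGraph n) {h₀ : G.H} (h0 : G.ι h₀ ≠ h₀)
    (x : Quot (G.contrRel {h₀})) : Nat.card (G.fiber {h₀} x).H ≤ 2 := by
  have hinj : Function.Injective (fun k : (G.fiber {h₀} x).H => k.1) := Subtype.val_injective
  have : (fun k : (G.fiber {h₀} x).H => k.1) '' Set.univ ⊆ ({h₀, G.ι h₀} : Set G.H) := by
    rintro _ ⟨k, -, rfl⟩
    exact (mem_sym_singleton h0 _).1 k.2.1
  have h1 := Set.ncard_le_ncard this (Set.toFinite _)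
  rw [Set.ncard_image_of_injective _ hinj, Set.ncard_univ] at h1
  exact h1.trans ((Set.ncard_insert_le _ _).trans (by simp))

/-- Contracting a non-loop edge does not create weight. -/
lemma wcontract_nonloop (G : LeggedGraph n) {h₀ : G.H} (h0 : G.ι h₀ ≠ h₀)
    (hl : G.ε h₀ ≠ G.ε (G.ι h₀)) (x : Quot (G.contrRel {h₀})) :
    G.wcontract (fun _ => 0) {h₀} x = 0 := by
  rw [wcontract_zero, LeggedGraph.b1, numComps_eq_one _ (fiber_isConnected _ _ _)]
  have hE := two_mul_numEdges_add (G.fiber {h₀} x)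
  have h2 := card_fiber_H_le G h0 x
  have hV : 1 ≤ Nat.card (G.fiber {h₀} x).V := Nat.card_pos
  by_cases hem : Nat.card (G.fiber {h₀} x).H = 0
  · omega
  · obtain ⟨k⟩ := (Nat.card_pos_iff.1 (Nat.pos_of_ne_zero hem)).1
    have hne : (G.fiber {h₀} x).ε k ≠ (G.fiber {h₀} x).ε ((G.fiber {h₀} x).ι k) := by
      intro e
      have e' : G.ε k.1 = G.ε (G.ι k.1) := congrArg Subtype.val e
      rcases (mem_sym_singleton h0 _).1 k.2.1 with h | h <;> rw [h] at e'
      · exact hl e'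
      · rw [G.ι_invol] at e'; exact hl e'.symm
    have : 1 < Nat.card (G.fiber {h₀} x).V :=
      Finite.one_lt_card_iff_nontrivial.2 ⟨_, _, hne⟩
    omega

/-- Contracting a loop creates a vertex of weight one at its base. -/
lemma wcontract_loop (G : LeggedGraph n) {h₀ : G.H} (h0 : G.ι h₀ ≠ h₀)
    (hl : G.ε h₀ = G.ε (G.ι h₀)) (v : G.V) :
    G.wcontract (fun _ => 0) {h₀} (Quot.mk _ v) = if v = G.ε h₀ then 1 else 0 := by
  rw [wcontract_zero, LeggedGraph.b1, numComps_eq_one _ (fiber_isConnected _ _ _)]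
  have hid : ∀ a b, Quot.mk (G.contrRel {h₀}) a = Quot.mk (G.contrRel {h₀}) b → a = b := by
    intro a b h
    refine congrArg (Quot.lift id ?_) h
    rintro _ _ ⟨k, hk, rfl, rfl⟩
    rcases (mem_sym_singleton h0 _).1 hk with rfl | rfl
    · exact hl
    · rw [G.ι_invol]; exact hl.symm
  have hE := two_mul_numEdges_add (G.fiber {h₀} (Quot.mk _ v))
  have hV : Nat.card (G.fiber {h₀} (Quot.mk _ v)).V = 1 :=
    Nat.card_eq_one_iff_unique.2
      ⟨⟨fun a b => Subtype.ext (hid _ _ (a.2.trans b.2.symm))⟩, (G.fiber {h₀} (Quot.mk _ v)).neV⟩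
  have h2 := card_fiber_H_le G h0 (Quot.mk _ v)
  rw [hV]
  by_cases hv : v = G.ε h₀
  · have hx : Quot.mk (G.contrRel {h₀}) (G.ε h₀) = Quot.mk (G.contrRel {h₀}) v := by rw [hv]
    have hm := (mem_sym_singleton h0 h₀).2 (Or.inl rfl)
    let k : (G.fiber {h₀} (Quot.mk _ v)).H := ⟨h₀, hm, hx⟩
    have hne : k ≠ (G.fiber {h₀} (Quot.mk _ v)).ι k := fun e =>
      h0 (congrArg Subtype.val e).symm
    have : 1 < Nat.card (G.fiber {h₀} (Quot.mk _ v)).H :=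
      Finite.one_lt_card_iff_nontrivial.2 ⟨_, _, hne⟩
    rw [if_pos hv]; omega
  · have : Nat.card (G.fiber {h₀} (Quot.mk _ v)).H = 0 := by
      rw [Nat.card_eq_zero]
      refine Or.inl ⟨fun k => hv ?_⟩
      have h3 := hid _ _ k.2.2
      rcases (mem_sym_singleton h0 _).1 k.2.1 with h | h <;> rw [h] at h3
      · exact h3.symm
      · rw [hl]; exact h3.symm
    rw [if_neg hv]; omega

/-- Recognition of one-edge contractions: `p` collapses the two ends of `h₀`, and `q` identifies
the half-edges of `G'` with those of `G` other than `h₀` and `ι h₀`. -/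
lemma oneEdgeWContr_of_maps {G G' : LeggedGraph n} {w : G.V → ℕ} {w' : G'.V → ℕ} (h₀ : G.H)
    (h0 : G.ι h₀ ≠ h₀) (p : G.V → G'.V) (q : G'.H → G.H) (hq : Function.Injective q)
    (hq1 : ∀ k, q k ≠ h₀ ∧ q k ≠ G.ι h₀) (hq2 : ∀ k, k ≠ h₀ → k ≠ G.ι h₀ → ∃ k', q k' = k)
    (hqι : ∀ k, q (G'.ι k) = G.ι (q k)) (hql : ∀ i, q (G'.leg i) = G.leg i)
    (hpε : ∀ k, p (G.ε (q k)) = G'.ε k) (hps : Function.Surjective p)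
    (hp0 : p (G.ε h₀) = p (G.ε (G.ι h₀)))
    (hp1 : ∀ a b, p a = p b → a = b ∨ (a = G.ε h₀ ∧ b = G.ε (G.ι h₀)) ∨
      (b = G.ε h₀ ∧ a = G.ε (G.ι h₀)))
    (hw : ∀ v, w' (p v) = G.wcontract w {h₀} (Quot.mk _ v)) : OneEdgeWContr G w G' w' := by
  refine ⟨h₀, h0, ?_⟩
  have hlift : ∀ a b, G.contrRel {h₀} a b → p a = p b := by
    rintro _ _ ⟨k, hk, rfl, rfl⟩
    rcases (mem_sym_singleton h0 _).1 hk with rfl | rfl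
    · exact hp0
    · rw [G.ι_invol]; exact hp0.symm
  have hP : Function.Bijective (Quot.lift p hlift) := by
    refine ⟨fun a b => ?_, fun x => (hps x).imp' (Quot.mk _) fun a ha => ha⟩
    induction a using Quot.ind with | _ a =>
    induction b using Quot.ind with | _ b =>
    intro h
    have hr : G.contrRel {h₀} (G.ε h₀) (G.ε (G.ι h₀)) :=
      ⟨h₀, (mem_sym_singleton h0 _).2 (Or.inl rfl), rfl, rfl⟩
    rcases hp1 a b h with rfl | ⟨rfl, rfl⟩ | ⟨rfl, rfl⟩
    · rfl
    · exact Quot.sound hr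
    · exact (Quot.sound hr).symm
  have hns : ∀ k, q k ∉ G.sym {h₀} := fun k hk => by
    rcases (mem_sym_singleton h0 _).1 hk with h | h
    · exact (hq1 k).1 h
    · exact (hq1 k).2 h
  have hQ : Function.Bijective (fun k => (⟨q k, hns k⟩ : (G.contract {h₀}).H)) := by
    refine ⟨fun a b h => hq (congrArg Subtype.val h), fun k => ?_⟩
    have hk := k.2
    rw [mem_sym_singleton h0, not_or] at hk
    exact (hq2 k.1 hk.1 hk.2).imp fun k' h => Subtype.ext h
  let eV : (G.contract {h₀}).V ≃ G'.V := Equiv.ofBijective _ hP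
  let eH : G'.H ≃ (G.contract {h₀}).H := Equiv.ofBijective _ hQ
  have heH : ∀ k, (eH k).1 = q k := fun k => rfl
  refine ⟨eV, eH.symm, fun h => ?_, fun h => ?_, fun i => ?_, fun v => ?_⟩
  · obtain ⟨k, rfl⟩ := eH.surjective h
    rw [Equiv.symm_apply_apply, Equiv.symm_apply_eq]
    exact Subtype.ext (hqι k).symm
  · obtain ⟨k, rfl⟩ := eH.surjective h
    rw [Equiv.symm_apply_apply, ← hpε]
    rfl
  · rw [Equiv.symm_apply_eq]
    exact Subtype.ext (hql i).symm
  · induction v using Quot.ind with | _ v =>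
    exact hw v


/-! ### Stable graphs without weights and the common contraction of an elementary move -/

/-- A connected graph with all valences at least three, viewed as a stable weighted graph with zero
weights; `hcard` says that its first Betti number is `g`. -/
def mkStable {g : ℕ} (G : LeggedGraph n) (hc : Conn G.ι G.ε) (h3 : ∀ v, 3 ≤ G.valence v)
    (hcard : Nat.card G.H + 2 = 2 * g + 2 * Nat.card G.V + n) : StableWGraph g n where
  Γ := G
  w := fun _ => 0
  conn := isConnected_of_conn hc
  stab := fun v => ⟨fun _ => h3 v, fun h => absurd h (by simp)⟩
  genus_eq := by
    have := two_mul_numEdges_add G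
    rw [LeggedGraph.genus, finsum_zero, LeggedGraph.b1, numComps_eq_one _ (isConnected_of_conn hc)]
    omega

lemma mkStable_big {g : ℕ} (G : LeggedGraph n) (hc : Conn G.ι G.ε) (h3 : ∀ v, 3 ≤ G.valence v)
    (hcard : Nat.card G.H + 2 = 2 * g + 2 * Nat.card G.V + n)
    (hb : 2 * g + n ≤ Nat.card G.V + 3) : bigStratum g n (mkStable G hc h3 hcard) := by
  have := two_mul_numEdges_add G
  show 3 * (g : ℤ) - 4 + n ≤ G.numEdges
  omega

/-- The map collapsing the vertex `v` onto `u`. -/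
noncomputable def collapseMap {V : Type} (u v : V) (huv : u ≠ v) (x : V) : {x : V // x ≠ v} :=
  if hx : x = v then ⟨u, huv⟩ else ⟨x, hx⟩

lemma collapseMap_self {V : Type} {u v : V} (huv : u ≠ v) : collapseMap u v huv v = ⟨u, huv⟩ :=
  dif_pos rfl

lemma collapseMap_of_ne {V : Type} {u v : V} (huv : u ≠ v) {x : V} (hx : x ≠ v) :
    collapseMap u v huv x = ⟨x, hx⟩ := dif_neg hx

lemma collapseMap_eq_iff {V : Type} {u v : V} (huv : u ≠ v) (x : V) (y : {x : V // x ≠ v}) :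
    collapseMap u v huv x = y ↔ x = y.1 ∨ (x = v ∧ y.1 = u) := by
  by_cases hx : x = v
  · subst hx
    rw [collapseMap_self, Subtype.ext_iff]
    constructor
    · intro h; exact Or.inr ⟨rfl, h.symm⟩
    · rintro (h | ⟨_, h⟩)
      exacts [absurd h.symm y.2, h.symm]
  · rw [collapseMap_of_ne huv hx, Subtype.ext_iff]; simp [hx]

lemma collapseMap_inj {V : Type} {u v : V} (huv : u ≠ v) {a b : V}
    (hab : collapseMap u v huv a = collapseMap u v huv b) :
    a = b ∨ (a = u ∧ b = v) ∨ (b = u ∧ a = v) := by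
  by_cases hb : b = v
  · rw [hb, collapseMap_self, collapseMap_eq_iff] at hab
    subst hb
    simp only at hab
    tauto
  · rw [collapseMap_of_ne huv hb, collapseMap_eq_iff] at hab
    simp only at hab
    tauto

/-- The contraction of the non-loop edge `{h₀, ι h₀}`, with the vertex `ε (ι h₀)` removed. -/
noncomputable def collapse (G : LeggedGraph n) (h₀ : G.H) (hl : G.ε h₀ ≠ G.ε (G.ι h₀)) :
    LeggedGraph n where
  V := {x : G.V // x ≠ G.ε (G.ι h₀)}
  H := {k : G.H // k ≠ h₀ ∧ k ≠ G.ι h₀}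
  finV := inferInstance
  finH := inferInstance
  neV := ⟨⟨G.ε h₀, hl⟩⟩
  ι := fun k => ⟨G.ι k.1, fun e => k.2.2 ((G.ι_invol k.1).symm.trans (congrArg G.ι e)),
    fun e => k.2.1 ((G.ι_invol k.1).symm.trans ((congrArg G.ι e).trans (G.ι_invol h₀)))⟩
  ι_invol := fun k => Subtype.ext (G.ι_invol k.1)
  ε := fun k => collapseMap _ _ hl (G.ε k.1)
  leg := fun i => ⟨G.leg i, by
    constructor
    · rintro rfl; exact hl (by rw [G.leg_fix])
    · intro e
      have := G.leg_fix i
      rw [e, G.ι_invol] at this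
      exact hl (by rw [← this])⟩
  leg_fix := fun i => Subtype.ext (G.leg_fix i)
  leg_inj := fun i j hij => G.leg_inj (congrArg Subtype.val hij)
  fix_leg := fun h hh => (G.fix_leg h.1 (congrArg Subtype.val hh)).imp fun i hi => Subtype.ext hi

lemma card_collapse_V (G : LeggedGraph n) (h₀ : G.H) (hl : G.ε h₀ ≠ G.ε (G.ι h₀)) :
    Nat.card (collapse G h₀ hl).V + 1 = Nat.card G.V := by
  rw [← Nat.card_congr (Equiv.sumCompl fun x : G.V => x = G.ε (G.ι h₀)), Nat.card_sum]
  have e2 : Nat.card {x : G.V // x = G.ε (G.ι h₀)} = 1 := by simp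
  rw [e2, add_comm]; rfl

lemma card_collapse_H (G : LeggedGraph n) (h₀ : G.H) (hl : G.ε h₀ ≠ G.ε (G.ι h₀)) :
    Nat.card (collapse G h₀ hl).H + 2 = Nat.card G.H := by
  have hne : h₀ ≠ G.ι h₀ := fun e => hl (congrArg G.ε e)
  have h1 := Set.ncard_add_ncard_compl ({h₀, G.ι h₀} : Set G.H)
  rw [Set.ncard_pair hne] at h1
  rw [← h1, add_comm]
  congr 1
  refine Nat.card_congr (Equiv.subtypeEquivRight fun k => ?_)
  simp

lemma collapse_conn (G : LeggedGraph n) (h₀ : G.H) (hl : G.ε h₀ ≠ G.ε (G.ι h₀))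
    (hc : Conn G.ι G.ε) : Conn (collapse G h₀ hl).ι (collapse G h₀ hl).ε := by
  intro x y
  have hx : ∀ x : {x : G.V // x ≠ G.ε (G.ι h₀)}, collapseMap _ _ hl x.1 = x := fun x =>
    collapseMap_of_ne hl x.2
  have := hc.map (R := fun x y => ∃ h, (collapse G h₀ hl).ε h = x ∧
    (collapse G h₀ hl).ε ((collapse G h₀ hl).ι h) = y) (collapseMap _ _ hl) (fun k => ?_) x.1 y.1
  · rwa [hx x, hx y] at this
  have e : collapseMap _ _ hl (G.ε h₀) = collapseMap _ _ hl (G.ε (G.ι h₀)) := by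
    rw [collapseMap_self, collapseMap_of_ne hl hl]
  by_cases h1 : k = h₀
  · subst h1; rw [← e]; exact .refl _
  by_cases h2 : k = G.ι h₀
  · subst h2; rw [G.ι_invol, e]; exact .refl _
  exact .rel _ _ ⟨⟨k, h1, h2⟩, rfl, rfl⟩

lemma collapse_valence (G : LeggedGraph n) (h₀ : G.H) (hl : G.ε h₀ ≠ G.ε (G.ι h₀))
    (h3 : Cubic G.ε) (x : (collapse G h₀ hl).V) : 3 ≤ (collapse G h₀ hl).valence x := by
  have e1 : (collapse G h₀ hl).valence x =
      Set.ncard {k : G.H | (k ≠ h₀ ∧ k ≠ G.ι h₀) ∧ collapseMap _ _ hl (G.ε k) = x} :=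
    Nat.card_congr ⟨fun k => ⟨k.1.1, k.1.2, k.2⟩, fun k => ⟨⟨k.1, k.2.1⟩, k.2.2⟩,
      fun _ => rfl, fun _ => rfl⟩
  have h3' : ∀ v, Set.ncard {k : G.H | G.ε k = v} = 3 := h3
  rw [e1]
  by_cases hx : x.1 = G.ε h₀
  · have hd : Disjoint {k : G.H | G.ε k = G.ε h₀} {k : G.H | G.ε k = G.ε (G.ι h₀)} := by
      rw [Set.disjoint_left]
      intro k h1 h2
      exact hl (h1.symm.trans h2)
    have h6 := Set.ncard_union_eq hd
    rw [h3', h3'] at h6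
    have hsub : {k : G.H | G.ε k = G.ε h₀} ∪ {k : G.H | G.ε k = G.ε (G.ι h₀)} ⊆
        {k : G.H | (k ≠ h₀ ∧ k ≠ G.ι h₀) ∧ collapseMap _ _ hl (G.ε k) = x} ∪ {h₀, G.ι h₀} := by
      intro k hk
      by_cases hk0 : k = h₀
      · exact Or.inr (Or.inl hk0)
      by_cases hk1 : k = G.ι h₀
      · exact Or.inr (Or.inr hk1)
      refine Or.inl ⟨⟨hk0, hk1⟩, (collapseMap_eq_iff _ _ _).2 ?_⟩
      rcases hk with hk | hk
      · exact Or.inl (hk.trans hx.symm)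
      · exact Or.inr ⟨hk, hx⟩
    have h7 := Set.ncard_le_ncard hsub (Set.toFinite _)
    have h8 := Set.ncard_union_le
      {k : G.H | (k ≠ h₀ ∧ k ≠ G.ι h₀) ∧ collapseMap _ _ hl (G.ε k) = x} {h₀, G.ι h₀}
    have h9 : ({h₀, G.ι h₀} : Set G.H).ncard ≤ 2 := (Set.ncard_insert_le _ _).trans (by simp)
    omega
  · rw [← h3' x.1]
    refine Set.ncard_le_ncard (fun k hk => ⟨⟨?_, ?_⟩, ?_⟩) (Set.toFinite _)
    · rintro rfl; exact hx hk.symm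
    · rintro rfl; exact x.2 hk.symm
    · exact (collapseMap_eq_iff _ _ _).2 (Or.inl hk)

/-- The graph `G` with another endpoint map. -/
def withEnds (G : LeggedGraph n) (ε' : G.H → G.V) : LeggedGraph n := { G with ε := ε' }

/-- A graph with the half-edges of `G` and endpoints agreeing with those of `G` after collapsing
`{h₀, ι h₀}` has the same contraction along this edge. -/
lemma withEnds_contr (G : LeggedGraph n) (h₀ : G.H) (hl : G.ε h₀ ≠ G.ε (G.ι h₀))
    (ε' : G.H → G.V) (e0 : ε' h₀ = G.ε h₀) (e1 : ε' (G.ι h₀) = G.ε (G.ι h₀))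
    (he : ∀ k, collapseMap _ _ hl (ε' k) = collapseMap _ _ hl (G.ε k)) :
    OneEdgeWContr (withEnds G ε') (fun _ => 0) (collapse G h₀ hl) (fun _ => 0) := by
  have h0 : G.ι h₀ ≠ h₀ := fun e => hl (by rw [e])
  refine oneEdgeWContr_of_maps (G := withEnds G ε') (G' := collapse G h₀ hl) h₀ h0
    (collapseMap _ _ hl) Subtype.val
    Subtype.val_injective (fun k => k.2) (fun k h1 h2 => ⟨⟨k, h1, h2⟩, rfl⟩) (fun _ => rfl)
    (fun _ => rfl) (fun k => he _) (fun x => ⟨x.1, collapseMap_of_ne hl x.2⟩) ?_ ?_ ?_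
  · show collapseMap _ _ hl (ε' h₀) = collapseMap _ _ hl (ε' (G.ι h₀))
    rw [e0, e1, collapseMap_self, collapseMap_of_ne hl hl]
  · intro a b hab
    show a = b ∨ (a = ε' h₀ ∧ b = ε' (G.ι h₀)) ∨ (b = ε' h₀ ∧ a = ε' (G.ι h₀))
    rw [e0, e1]
    exact collapseMap_inj hl hab
  · intro v
    refine (wcontract_nonloop (withEnds G ε') h0 ?_ _).symm
    show ε' h₀ ≠ ε' (G.ι h₀)
    rw [e0, e1]; exact hl

/-- Both sides of an elementary move contract to the same graph with a four-valent vertex. -/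
lemma move_codimOne {g : ℕ} (G : LeggedGraph n) (ε' : G.H → G.V) (hm : Move G.ι G.ε ε')
    (hg : Cubic G.ε ∧ Conn G.ι G.ε) (hg' : Cubic ε' ∧ Conn G.ι ε')
    (hcard : Nat.card G.H + 2 = 2 * g + 2 * Nat.card G.V + n)
    (hb : 2 * g + n ≤ Nat.card G.V + 2) :
    EqvGen (codimOneRel g n) (mkStable G hg.2 (fun v => (hg.1 v).ge) hcard)
      (mkStable (withEnds G ε') hg'.2 (fun v => (hg'.1 v).ge) hcard) := by
  obtain ⟨h, b, c, hl, hb', hc', eb, ec, rfl⟩ := hm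
  have hVc := card_collapse_V G h hl
  have hHc := card_collapse_H G h hl
  let C : StableWGraph g n := mkStable (collapse G h hl) (collapse_conn G h hl hg.2)
    (collapse_valence G h hl hg.1) (by omega)
  have hC : bigStratum g n C := mkStable_big _ _ _ _ (by omega)
  have hbh : b ≠ G.ι h := by rintro rfl; exact hl eb.symm
  have hch : c ≠ h := by rintro rfl; exact hl ec
  obtain ⟨s1, s2, s3⟩ := comp_swap G.ε b c
  have hcol : collapseMap _ _ hl (G.ε h) = collapseMap _ _ hl (G.ε (G.ι h)) := by
    rw [collapseMap_self, collapseMap_of_ne hl hl]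
  refine .trans _ C _ (.rel _ _ ⟨mkStable_big _ _ _ _ (by omega), hC, Or.inr (Or.inl ?_)⟩)
    (.rel _ _ ⟨hC, mkStable_big _ _ _ _ ?_, Or.inr (Or.inr ?_)⟩)
  · exact withEnds_contr G h hl G.ε rfl rfl fun _ => rfl
  · show 2 * g + n ≤ Nat.card G.V + 3
    omega
  · refine withEnds_contr G h hl _ (s3 _ hb'.symm hch.symm) (s3 _ hbh.symm hc'.symm) fun k => ?_
    by_cases hkb : k = b
    · rw [hkb, s1, ec, eb, hcol]
    by_cases hkc : k = c
    · rw [hkc, s2, ec, eb, hcol]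
    rw [s3 _ hkb hkc]

/-! ### Expansions -/

lemma card_subtype_sum {A B : Type} [Finite A] [Finite B] (P : A ⊕ B → Prop) :
    Nat.card {k // P k} = Nat.card {a // P (.inl a)} + Nat.card {b // P (.inr b)} := by
  rw [← Nat.card_sum]; exact Nat.card_congr Equiv.subtypeSum

/-- The graph with one more edge than `G`, whose two halves are `inr true` and `inr false`; the
vertices and endpoints are prescribed. -/
def addEdge (G : LeggedGraph n) (V' : Type) [Finite V'] [Nonempty V'] (ε' : G.H ⊕ Bool → V') :
    LeggedGraph n where
  V := V'
  H := G.H ⊕ Bool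
  finV := inferInstance
  finH := inferInstance
  neV := inferInstance
  ι := Sum.map G.ι not
  ι_invol := by rintro (h | b) <;> simp [G.ι_invol]
  ε := ε'
  leg := fun i => .inl (G.leg i)
  leg_fix := fun i => by simp [G.leg_fix]
  leg_inj := fun i j h => G.leg_inj (Sum.inl_injective h)
  fix_leg := by
    rintro (h | b) hh
    · exact (G.fix_leg h (Sum.inl_injective hh)).imp fun i hi => congrArg _ hi
    · simp at hh

lemma card_addEdge_H (G : LeggedGraph n) (V' : Type) [Finite V'] [Nonempty V']
    (ε' : G.H ⊕ Bool → V') : Nat.card (addEdge G V' ε').H = Nat.card G.H + 2 := by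
  show Nat.card (G.H ⊕ Bool) = _
  simp

/-- An expansion with vanishing weights of a graph in the stratum stays in the stratum. -/
lemma addEdge_codimOne {g : ℕ} (A : StableWGraph g n) (hA : bigStratum g n A) (V' : Type)
    [Finite V'] [Nonempty V'] (ε' : A.Γ.H ⊕ Bool → V')
    (hc : Conn (addEdge A.Γ V' ε').ι (addEdge A.Γ V' ε').ε)
    (h3 : ∀ v, 3 ≤ (addEdge A.Γ V' ε').valence v)
    (hcard : Nat.card (addEdge A.Γ V' ε').H + 2 =
      2 * g + 2 * Nat.card (addEdge A.Γ V' ε').V + n)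
    (ho : OneEdgeWContr (addEdge A.Γ V' ε') (fun _ => 0) A.Γ A.w) :
    EqvGen (codimOneRel g n) A (mkStable (addEdge A.Γ V' ε') hc h3 hcard) := by
  refine .rel _ _ ⟨hA, ?_, Or.inr (Or.inr ho)⟩
  have h1 := two_mul_numEdges_add (addEdge A.Γ V' ε')
  have h2 := two_mul_numEdges_add A.Γ
  rw [card_addEdge_H] at h1
  have h4 : 3 * (g : ℤ) - 4 + n ≤ A.Γ.numEdges := hA
  show 3 * (g : ℤ) - 4 + n ≤ (addEdge A.Γ V' ε').numEdges
  omega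

/-- Endpoints after splitting `v`: the half-edges in `P` move to the new vertex `none`. -/
noncomputable def splitEnds (G : LeggedGraph n) (v : G.V) (P : Set G.H) : G.H ⊕ Bool → Option G.V :=
  Sum.elim (fun h => if h ∈ P then none else some (G.ε h)) fun b => if b then none else some v

lemma split_conn (G : LeggedGraph n) (v : G.V) (P : Set G.H) (hP : ∀ h ∈ P, G.ε h = v)
    (hc : Conn G.ι G.ε) : Conn (addEdge G _ (splitEnds G v P)).ι
      (addEdge G _ (splitEnds G v P)).ε := by
  have hn : EqvGen (fun x y => ∃ h, (addEdge G _ (splitEnds G v P)).ε h = x ∧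
      (addEdge G _ (splitEnds G v P)).ε ((addEdge G _ (splitEnds G v P)).ι h) = y)
      none (some v) := .rel _ _ ⟨.inr true, rfl, rfl⟩
  have hs : ∀ h, EqvGen (fun x y => ∃ h, (addEdge G _ (splitEnds G v P)).ε h = x ∧
      (addEdge G _ (splitEnds G v P)).ε ((addEdge G _ (splitEnds G v P)).ι h) = y)
      (some (G.ε h)) (splitEnds G v P (.inl h)) := by
    intro h
    by_cases hh : h ∈ P
    · rw [hP h hh]
      simp only [splitEnds, Sum.elim_inl, hh, if_true]
      exact hn.symm
    · simp only [splitEnds, Sum.elim_inl, hh, if_false]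
      exact .refl _
  have hv : ∀ x : Option G.V, EqvGen (fun x y => ∃ h, (addEdge G _ (splitEnds G v P)).ε h = x ∧
      (addEdge G _ (splitEnds G v P)).ε ((addEdge G _ (splitEnds G v P)).ι h) = y)
      x (some v) := by
    rintro (_ | x)
    · exact hn
    · refine hc.map some (fun h => ?_) x v
      exact (hs h).trans _ _ _ (.trans _ _ _ (.rel _ _ ⟨.inl h, rfl, rfl⟩) (hs _).symm)
  exact fun x y => (hv x).trans _ _ _ (hv y).symm

lemma split_valence (G : LeggedGraph n) (v : G.V) (P : Set G.H) (hP : ∀ h ∈ P, G.ε h = v)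
    (hP2 : P.ncard = 2) (h4 : 4 ≤ G.valence v) (h3 : ∀ u, 3 ≤ G.valence u) (x : Option G.V) :
    3 ≤ (addEdge G _ (splitEnds G v P)).valence x := by
  have e : (addEdge G _ (splitEnds G v P)).valence x =
      Nat.card {a // splitEnds G v P (.inl a) = x} + Nat.card {b // splitEnds G v P (.inr b) = x} :=
    card_subtype_sum fun k => splitEnds G v P k = x
  rw [e]
  rcases x with _ | u
  · have h1 : Nat.card {a // splitEnds G v P (.inl a) = none} = 2 := by
      rw [← hP2]
      refine Nat.card_congr (Equiv.subtypeEquivRight fun k => ?_)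
      simp [splitEnds]
    have h2 : 0 < Nat.card {b // splitEnds G v P (.inr b) = none} :=
      Nat.card_pos_iff.2 ⟨⟨true, rfl⟩, inferInstance⟩
    omega
  · have h1 : {k | G.ε k = u} ⊆ {a | splitEnds G v P (.inl a) = some u} ∪ {k | k ∈ P ∧ u = v} := by
      intro k hk
      by_cases hkP : k ∈ P
      · exact Or.inr ⟨hkP, hk.symm.trans (hP k hkP)⟩
      · refine Or.inl ?_
        simpa [splitEnds, hkP] using hk
    have h5 := (Set.ncard_le_ncard h1 (Set.toFinite _)).trans (Set.ncard_union_le _ _)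
    change G.valence u ≤ Nat.card {a // splitEnds G v P (.inl a) = some u} + _ at h5
    by_cases huv : u = v
    · subst huv
      have h2 : 0 < Nat.card {b // splitEnds G u P (.inr b) = some u} :=
        Nat.card_pos_iff.2 ⟨⟨false, rfl⟩, inferInstance⟩
      have h6 : {k | k ∈ P ∧ u = u} = P := by simp
      rw [h6, hP2] at h5
      omega
    · have h6 : {k | k ∈ P ∧ u = v} = ∅ := by simp [huv]
      rw [h6, Set.ncard_empty] at h5
      have := h3 u
      omega

lemma split_contr (G : LeggedGraph n) (v : G.V) (P : Set G.H) (hP : ∀ h ∈ P, G.ε h = v)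
    (w : G.V → ℕ) (hw : ∀ u, w u = 0) :
    OneEdgeWContr (addEdge G _ (splitEnds G v P)) (fun _ => 0) G w := by
  refine oneEdgeWContr_of_maps (G := addEdge G _ (splitEnds G v P)) (.inr true) (by simp [addEdge])
    (fun x => x.getD v) Sum.inl Sum.inl_injective ?_ ?_ (fun _ => rfl) (fun _ => rfl) ?_
    (fun x => ⟨some x, rfl⟩) rfl ?_ ?_
  · intro k
    exact ⟨Sum.inl_ne_inr, Sum.inl_ne_inr⟩
  · rintro (k | _ | _) h1 h2
    · exact ⟨k, rfl⟩
    · exact absurd rfl h2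
    · exact absurd rfl h1
  · intro k
    show (splitEnds G v P (.inl k)).getD v = _
    by_cases hk : k ∈ P
    · simp [splitEnds, hk, hP k hk]
    · simp [splitEnds, hk]
  · rintro (_ | a) (_ | b) h
    · exact Or.inl rfl
    · exact Or.inr (Or.inl ⟨rfl, congrArg some h.symm⟩)
    · exact Or.inr (Or.inr ⟨rfl, congrArg some h⟩)
    · exact Or.inl (congrArg some h)
  · intro x
    rw [hw]
    exact (wcontract_nonloop _ (by simp [addEdge]) (by simp [addEdge, splitEnds]) _).symm

/-- A vertex of valence at least four can be split. -/
lemma expand_split {g : ℕ} (A : StableWGraph g n) (hA : bigStratum g n A) (hw : ∀ v, A.w v = 0)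
    (hcard : Nat.card A.Γ.H + 2 = 2 * g + 2 * Nat.card A.Γ.V + n) (v : A.Γ.V)
    (h4 : 4 ≤ A.Γ.valence v) : ∃ (G : LeggedGraph n) (hc : Conn G.ι G.ε)
      (h3 : ∀ v, 3 ≤ G.valence v) (hcard : Nat.card G.H + 2 = 2 * g + 2 * Nat.card G.V + n),
      Nat.card G.H = Nat.card A.Γ.H + 2 ∧
      EqvGen (codimOneRel g n) A (mkStable G hc h3 hcard) := by
  obtain ⟨P, hP, hP2⟩ := Set.exists_subset_card_eq (s := {h | A.Γ.ε h = v}) (n := 2)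
    (le_trans (by norm_num) h4)
  refine ⟨addEdge A.Γ _ (splitEnds A.Γ v P), split_conn _ _ _ hP (conn_of_isConnected A.conn),
    split_valence _ _ _ hP hP2 h4 fun u => (A.stab u).1 (hw u), ?_, card_addEdge_H _ _ _,
    addEdge_codimOne A hA _ _ _ _ _ (split_contr _ _ _ hP _ hw)⟩
  rw [card_addEdge_H]
  have : Nat.card (addEdge A.Γ _ (splitEnds A.Γ v P)).V = Nat.card A.Γ.V + 1 := by
    show Nat.card (Option A.Γ.V) = _
    simp
  omega

/-- A leaf of weight one can be replaced by a loop. -/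
lemma expand_loop {g : ℕ} (A : StableWGraph g n) (hA : bigStratum g n A) (v : A.Γ.V)
    (hv : A.w v = 1) (hw : ∀ u, u ≠ v → A.w u = 0)
    (hcard : Nat.card A.Γ.H + 4 = 2 * g + 2 * Nat.card A.Γ.V + n) :
    ∃ (G : LeggedGraph n) (hc : Conn G.ι G.ε)
      (h3 : ∀ v, 3 ≤ G.valence v) (hcard : Nat.card G.H + 2 = 2 * g + 2 * Nat.card G.V + n),
      Nat.card G.H = Nat.card A.Γ.H + 2 ∧
      EqvGen (codimOneRel g n) A (mkStable G hc h3 hcard) := by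
  refine ⟨addEdge A.Γ A.Γ.V (Sum.elim A.Γ.ε fun _ => v), ?_, ?_, ?_, card_addEdge_H _ _ _,
    addEdge_codimOne A hA _ _ _ _ _ ?_⟩
  · refine fun x y => ((conn_of_isConnected A.conn) x y).mono ?_
    rintro _ _ ⟨h, rfl, rfl⟩
    exact ⟨.inl h, rfl, rfl⟩
  · intro (u : A.Γ.V)
    have e : (addEdge A.Γ A.Γ.V (Sum.elim A.Γ.ε fun _ => v)).valence u =
        A.Γ.valence u + Nat.card {b : Bool // v = u} :=
      card_subtype_sum fun k => Sum.elim A.Γ.ε (fun _ => v) k = u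
    rw [e]
    by_cases huv : u = v
    · subst huv
      have h1 := (A.stab u).2 hv
      have h2 : Nat.card {b : Bool // u = u} = 2 := by simp
      omega
    · exact ((A.stab u).1 (hw u huv)).trans (Nat.le_add_right _ _)
  · rw [card_addEdge_H]
    show _ = 2 * g + 2 * Nat.card A.Γ.V + n
    omega
  · refine oneEdgeWContr_of_maps (G := addEdge A.Γ A.Γ.V (Sum.elim A.Γ.ε fun _ => v)) (.inr true)
      (by simp [addEdge]) id Sum.inl Sum.inl_injective ?_ ?_ (fun _ => rfl) (fun _ => rfl)
      (fun _ => rfl) Function.surjective_id rfl (fun a b h => Or.inl h) ?_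
    · intro k
      exact ⟨Sum.inl_ne_inr, Sum.inl_ne_inr⟩
    · rintro (k | _ | _) h1 h2
      · exact ⟨k, rfl⟩
      · exact absurd rfl h2
      · exact absurd rfl h1
    · intro x
      refine Eq.trans ?_ (wcontract_loop (addEdge A.Γ A.Γ.V (Sum.elim A.Γ.ε fun _ => v))
        (h₀ := .inr true) (by simp [addEdge]) (by simp [addEdge]) x).symm
      show A.w x = if x = v then 1 else 0
      by_cases hx : x = v
      · rw [if_pos hx, hx, hv]
      · rw [if_neg hx, hw x hx]

/-! ### Spanning trees -/

/-- Legs and a spanning tree: the pairs `Φ (inr (x, true))`, `Φ (inr (x, false))` are the `k` edges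
of a spanning tree. -/
lemma exists_spanning (G : LeggedGraph n) (hc : Conn G.ι G.ε) (k : ℕ) (hk : Nat.card G.V = k + 1) :
    ∃ Φ : Fin n ⊕ (Fin k × Bool) → G.H, Function.Injective Φ ∧ (∀ i, Φ (.inl i) = G.leg i) ∧
      (∀ x b, Φ (.inr (x, !b)) = G.ι (Φ (.inr (x, b)))) ∧
      ∀ a b, EqvGen (fun a b => ∃ x, a = G.ε (Φ (.inr (x, true))) ∧
        b = G.ε (Φ (.inr (x, false)))) a b := by
  obtain ⟨r⟩ := G.neV
  obtain ⟨f, hf⟩ := hc.exists_height G.ι_invol r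
  choose κ hκ1 hκ2 using hf
  have hcr : Nat.card {v // v ≠ r} = k := by
    have h1 := Set.ncard_add_ncard_compl ({r} : Set G.V)
    rw [Set.ncard_singleton, hk, add_comm] at h1
    exact Nat.add_right_cancel h1
  obtain ⟨e⟩ : Nonempty ({v // v ≠ r} ≃ Fin k) := ⟨Finite.equivFinOfCardEq hcr⟩
  let K : Fin k → G.H := fun x => κ _ (e.symm x).2
  have hK1 : ∀ x, G.ε (K x) = (e.symm x).1 := fun x => hκ1 _ _
  have hK2 : ∀ x, f (G.ε (G.ι (K x))) < f (G.ε (K x)) := fun x => by rw [hK1]; exact hκ2 _ _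
  have hKinj : ∀ x y, K x = K y → x = y := fun x y h => by
    have := congrArg G.ε h
    rw [hK1, hK1] at this
    exact e.symm.injective (Subtype.ext this)
  have hKι : ∀ x y, K x ≠ G.ι (K y) := fun x y h => by
    have h1 := hK2 x
    have h2 := hK2 y
    rw [h, G.ι_invol] at h1
    omega
  have hKl : ∀ x i, K x ≠ G.leg i := fun x i h => by
    have h1 := hK2 x
    rw [h, G.leg_fix] at h1
    omega
  have hιl : ∀ x i, G.ι (K x) ≠ G.leg i := fun x i h => by
    have h1 := congrArg G.ι h
    rw [G.ι_invol, G.leg_fix] at h1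
    exact hKl x i h1
  refine ⟨Sum.elim G.leg fun y => if y.2 then K y.1 else G.ι (K y.1), ?_, fun _ => rfl, ?_, ?_⟩
  · have hιinj : Function.Injective G.ι := Function.LeftInverse.injective G.ι_invol
    rintro (i | ⟨x, _ | _⟩) (j | ⟨y, _ | _⟩) h <;>
      simp only [Sum.elim_inl, Sum.elim_inr, if_true, Bool.false_eq_true, if_false] at h
    · rw [G.leg_inj h]
    · exact absurd h.symm (hιl y i)
    · exact absurd h.symm (hKl y i)
    · exact absurd h (hιl x j)
    · rw [hKinj x y (hιinj h)]
    · exact absurd h.symm (hKι y x)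
    · exact absurd h (hKl x j)
    · exact absurd h (hKι x y)
    · rw [hKinj x y h]
  · rintro x (_ | _)
    · simp [G.ι_invol]
    · simp
  · have key : ∀ m v, f v ≤ m → EqvGen (fun a b => ∃ x, a = G.ε (K x) ∧ b = G.ε (G.ι (K x))) v r := by
      intro m
      induction m with
      | zero =>
        intro v hv
        by_cases hvr : v = r
        · rw [hvr]; exact .refl _
        · have := hκ2 v hvr; omega
      | succ m ih =>
        intro v hv
        by_cases hvr : v = r
        · rw [hvr]; exact .refl _
        · have hx : K (e ⟨v, hvr⟩) = κ v hvr := by simp [K]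
          have h2 := hκ2 v hvr
          refine .trans _ _ _ (.rel _ _ ⟨e ⟨v, hvr⟩, ?_, rfl⟩) (ih _ ?_)
          · rw [hx, hκ1]
          · rw [hx]; omega
    exact fun a b => (key _ a le_rfl).trans _ _ _ (key _ b le_rfl).symm

lemma two_mul_card_V_le (G : LeggedGraph n) (hc : Conn G.ι G.ε) :
    n + 2 * Nat.card G.V ≤ Nat.card G.H + 2 := by
  have hp : 0 < Nat.card G.V := Nat.card_pos
  obtain ⟨Φ, hΦ, -⟩ := exists_spanning G hc (Nat.card G.V - 1) (by omega)
  have := Nat.card_le_card_of_injective Φ hΦ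
  simp at this
  omega

/-! ### Graphs in the stratum -/

/-- The number of half-edges is the sum of the valences. -/
lemma card_H_eq_sum (G : LeggedGraph n) [Fintype G.V] : Nat.card G.H = ∑ v, G.valence v := by
  rw [← Nat.card_congr (Equiv.sigmaFiberEquiv G.ε), Nat.card_sigma]
  rfl

/-- Counting half-edges: a graph in the stratum is trivalent without weights, or has exactly one
four-valent vertex, or exactly one leaf of weight one. In the last two cases it is a contraction of
a graph of the first kind. -/
lemma exists_cubic {g : ℕ} (A : StableWGraph g n) (hA : bigStratum g n A) :
    ∃ (G : LeggedGraph n) (hg : Cubic G.ε ∧ Conn G.ι G.ε)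
      (hcard : Nat.card G.H + 2 = 2 * g + 2 * Nat.card G.V + n),
      EqvGen (codimOneRel g n) A (mkStable G hg.2 (fun v => (hg.1 v).ge) hcard) := by
  have := Fintype.ofFinite A.Γ.V
  have hconn := conn_of_isConnected A.conn
  have hE := two_mul_numEdges_add A.Γ
  have hN := two_mul_card_V_le A.Γ hconn
  have hg := A.genus_eq
  rw [LeggedGraph.genus, LeggedGraph.b1, numComps_eq_one _ A.conn, finsum_eq_sum_of_fintype] at hg
  have hA' : 3 * (g : ℤ) - 4 + n ≤ A.Γ.numEdges := hA
  have hpt : ∀ v, 3 ≤ A.Γ.valence v + 2 * A.w v := fun v => by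
    have h0 := (A.stab v).1
    have h1 := (A.stab v).2
    omega
  -- `ex` is the excess of `valence + 2 * weight` over three
  obtain ⟨ex, hex⟩ : ∃ ex : A.Γ.V → ℕ, ∀ v, A.Γ.valence v + 2 * A.w v = 3 + ex v :=
    ⟨fun v => A.Γ.valence v + 2 * A.w v - 3, fun v => by have := hpt v; dsimp only; omega⟩
  have hsum : Nat.card A.Γ.H + 2 * ∑ v, A.w v = 3 * Nat.card A.Γ.V + ∑ v, ex v := by
    rw [card_H_eq_sum, Finset.mul_sum, ← Finset.sum_add_distrib, Finset.sum_congr rfl fun v _ => hex v,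
      Finset.sum_add_distrib, Finset.sum_const, Finset.card_univ, Nat.card_eq_fintype_card, smul_eq_mul,
      mul_comm]
  have hle : ∑ v, ex v + ∑ v, A.w v ≤ 1 := by omega
  have hwle : ∀ v, A.w v ≤ ∑ v, A.w v := fun v =>
    Finset.single_le_sum (fun _ _ => Nat.zero_le _) (Finset.mem_univ v)
  have hxle : ∀ v, ex v ≤ ∑ v, ex v := fun v =>
    Finset.single_le_sum (fun _ _ => Nat.zero_le _) (Finset.mem_univ v)
  -- a stable expansion with the maximal number of edges is trivalent
  have hfin : (∃ (G : LeggedGraph n) (hc : Conn G.ι G.ε)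
      (h3 : ∀ v, 3 ≤ G.valence v) (hcard : Nat.card G.H + 2 = 2 * g + 2 * Nat.card G.V + n),
      Nat.card G.H + 6 = 6 * g + 3 * n ∧
      EqvGen (codimOneRel g n) A (mkStable G hc h3 hcard)) → ∃ (G : LeggedGraph n)
        (hg : Cubic G.ε ∧ Conn G.ι G.ε)
        (hcard : Nat.card G.H + 2 = 2 * g + 2 * Nat.card G.V + n),
      EqvGen (codimOneRel g n) A (mkStable G hg.2 (fun v => (hg.1 v).ge) hcard) := by
    rintro ⟨G, hc, h3, hcard, h6, hr⟩
    have := Fintype.ofFinite G.V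
    have hcub : Cubic G.ε := by
      have h7 := card_H_eq_sum G
      have h8 : ∑ v, G.valence v = ∑ v : G.V, 3 := by
        rw [Finset.sum_const, Finset.card_univ, ← Nat.card_eq_fintype_card, smul_eq_mul]
        omega
      exact fun v => ((Finset.sum_eq_sum_iff_of_le fun v _ => h3 v).1 h8.symm v (Finset.mem_univ v)).symm
    exact ⟨G, ⟨hcub, hc⟩, hcard, hr⟩
  apply hfin
  by_cases hW : ∑ v, A.w v = 0
  · have hw : ∀ v, A.w v = 0 := fun v => by have := hwle v; omega
    by_cases hX : ∑ v, ex v = 0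
    · have h3 : ∀ v, 3 ≤ A.Γ.valence v := fun v => (A.stab v).1 (hw v)
      refine ⟨A.Γ, hconn, h3, by omega, by omega, ?_⟩
      refine .rel _ _ ⟨hA, ?_, Or.inl ⟨Equiv.refl _, Equiv.refl _, fun _ => rfl, fun _ => rfl,
        fun _ => rfl, fun v => (hw v).symm⟩⟩
      exact hA'
    · obtain ⟨v, -, hv⟩ := Finset.exists_ne_zero_of_sum_ne_zero hX
      obtain ⟨G, hc, h3, hcard, hH, hr⟩ := expand_split A hA hw (by omega) v (by
        have := hex v; have := hw v; omega)
      exact ⟨G, hc, h3, hcard, by omega, hr⟩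
  · obtain ⟨v, -, hv⟩ := Finset.exists_ne_zero_of_sum_ne_zero hW
    have hv1 : A.w v = 1 := by have := hwle v; omega
    have hw : ∀ u, u ≠ v → A.w u = 0 := fun u hu => by
      have h := Finset.sum_le_sum_of_subset (f := A.w) (Finset.subset_univ {u, v})
      rw [Finset.sum_pair hu] at h
      omega
    obtain ⟨G, hc, h3, hcard, hH, hr⟩ := expand_loop A hA v hv1 hw (by omega)
    exact ⟨G, hc, h3, hcard, by omega, hr⟩

/-! ### Normal form -/

/-- The half-edges of a graph with `n` legs, `k` tree edges and `g` further edges. -/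
abbrev StdH (n k g : ℕ) : Type := (Fin n ⊕ (Fin k × Bool)) ⊕ (Fin g × Bool)

/-- The involution on legs and tree edges. -/
def treeInv {n k : ℕ} : Fin n ⊕ (Fin k × Bool) → Fin n ⊕ (Fin k × Bool) :=
  Sum.map id fun y => (y.1, !y.2)

/-- The involution whose edges are the tree edges and the further edges. -/
def stdInv {n k g : ℕ} : StdH n k g → StdH n k g := Sum.map treeInv fun y => (y.1, !y.2)

/-- The involution after cutting the `g` further edges in two leaves each. -/
def partInv {n k g : ℕ} : StdH n k g → StdH n k g := Sum.map treeInv id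

lemma partInv_invol {n k g : ℕ} (h : StdH n k g) : partInv (partInv h) = h := by
  rcases h with (i | ⟨x, b⟩) | y <;> simp [partInv, treeInv]

/-- The graph with half-edges `StdH n k g` and endpoint map `ε`. -/
def stdGraph {n k g : ℕ} (ε : StdH n k g → Fin (k + 1)) : LeggedGraph n where
  V := Fin (k + 1)
  H := StdH n k g
  finV := inferInstance
  finH := inferInstance
  neV := inferInstance
  ι := stdInv
  ι_invol := by rintro ((i | ⟨x, b⟩) | y) <;> simp [stdInv, treeInv]
  ε := ε
  leg := fun i => .inl (.inl i)
  leg_fix := fun _ => rfl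
  leg_inj := fun i j h => Sum.inl_injective (Sum.inl_injective h)
  fix_leg := by
    rintro ((i | ⟨x, b⟩) | ⟨y, b⟩) h
    · exact ⟨i, rfl⟩
    · simp [stdInv, treeInv] at h
    · simp [stdInv] at h

lemma conn_stdInv {k g : ℕ} {ε : StdH n k g → Fin (k + 1)} (hc : Conn partInv ε) :
    Conn stdInv ε := by
  refine fun a b => (hc.map id (fun h => ?_)) a b
  rcases h with a | b
  · exact .rel _ _ ⟨.inl a, rfl, rfl⟩
  · exact .refl _

/-- The stable graph defined by `stdGraph ε` when cutting the `g` further edges leaves a connected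
trivalent graph (in fact a tree). -/
def stdStable {k g : ℕ} (ε : StdH n k g → Fin (k + 1)) (hg : Cubic ε ∧ Conn partInv ε) :
    StableWGraph g n :=
  mkStable (stdGraph ε) (conn_stdInv hg.2) (fun v => (hg.1 v).ge) (by
    show Nat.card (StdH n k g) + 2 = 2 * g + 2 * Nat.card (Fin (k + 1)) + n
    simp
    ring)

lemma stdStable_big {k g : ℕ} (hk : k + 3 = 2 * g + n) (ε : StdH n k g → Fin (k + 1))
    (hg : Cubic ε ∧ Conn partInv ε) : bigStratum g n (stdStable ε hg) := by
  refine mkStable_big _ _ _ _ ?_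
  show 2 * g + n ≤ Nat.card (Fin (k + 1)) + 3
  simp
  omega

lemma std_relabel {k g : ℕ} (hk : k + 3 = 2 * g + n) {ε ε' : StdH n k g → Fin (k + 1)}
    (hs : Relabel partInv ε ε') (hg : Cubic ε ∧ Conn partInv ε) (hg' : Cubic ε' ∧ Conn partInv ε') :
    codimOneRel g n (stdStable ε hg) (stdStable ε' hg') := by
  obtain ⟨fV, fH, h1, h2, h3⟩ := hs
  refine ⟨stdStable_big hk _ _, stdStable_big hk _ _, Or.inl ⟨fV, fH, ?_, fun h => (h3 h).symm,
    fun i => h2 _ rfl, fun _ => rfl⟩⟩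
  show ∀ h : StdH n k g, fH (stdInv h) = stdInv (fH h)
  rintro (a | y)
  · refine (h1 (.inl a)).trans ?_
    rcases hf : fH (.inl a) with b | b
    · rfl
    -- an automorphism fixing the leaves cannot send a tree half-edge to a leaf
    · have h4 : fH (partInv (.inl a)) = fH (.inl a) := by rw [h1, hf]; rfl
      have h5 := h2 _ (fH.injective h4)
      rw [hf] at h5
      cases h5
  · rw [h2 (.inr y) rfl]
    exact h2 (.inr _) rfl

lemma std_move {k g : ℕ} (hk : k + 3 = 2 * g + n) {ε ε' : StdH n k g → Fin (k + 1)}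
    (hs : Move partInv ε ε') (hg : Cubic ε ∧ Conn partInv ε) (hg' : Cubic ε' ∧ Conn partInv ε') :
    EqvGen (codimOneRel g n) (stdStable ε hg) (stdStable ε' hg') := by
  have hm : Move stdInv ε ε' := by
    obtain ⟨a | y, b, c, h1, h2⟩ := hs
    · exact ⟨.inl a, b, c, h1, h2⟩
    · exact absurd rfl h1
  refine move_codimOne (stdGraph ε) ε' hm ⟨hg.1, conn_stdInv hg.2⟩ ⟨hg'.1, conn_stdInv hg'.2⟩ _ ?_
  show 2 * g + n ≤ Nat.card (Fin (k + 1)) + 2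
  simp
  omega

lemma std_eqvGen {k g : ℕ} (hk : k + 3 = 2 * g + n) {ε ε' : StdH n k g → Fin (k + 1)}
    (hs : EqvGen (Step partInv) ε ε') : ∀ (hg : Cubic ε ∧ Conn partInv ε)
      (hg' : Cubic ε' ∧ Conn partInv ε'),
    EqvGen (codimOneRel g n) (stdStable ε hg) (stdStable ε' hg') := by
  induction hs with
  | rel x y h =>
    intro hg hg'
    rcases h with h | h
    · exact .rel _ _ (std_relabel hk h hg hg')
    · exact std_move hk h hg hg'
  | refl x => exact fun _ _ => .refl _
  | symm x y _ ih => exact fun hg hg' => (ih hg' hg).symm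
  | trans x y z h _ ih1 ih2 =>
    intro hg hg'
    have hy := (eqvGen_step_good h).1 hg
    exact (ih1 hg hy).trans _ _ _ (ih2 hy hg')

/-- Cutting the edges outside a spanning tree brings a trivalent graph into normal form. -/
lemma exists_std {k g : ℕ} (hk : k + 3 = 2 * g + n) (G : LeggedGraph n)
    (hg : Cubic G.ε ∧ Conn G.ι G.ε) (hcard : Nat.card G.H + 2 = 2 * g + 2 * Nat.card G.V + n) :
    ∃ (ε : StdH n k g → Fin (k + 1)) (hg' : Cubic ε ∧ Conn partInv ε),
      codimOneRel g n (mkStable G hg.2 (fun v => (hg.1 v).ge) hcard) (stdStable ε hg') := by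
  have hH3 : Nat.card G.H = 3 * Nat.card G.V := by
    have := Fintype.ofFinite G.V
    have hval : ∀ v, G.valence v = 3 := hg.1
    rw [card_H_eq_sum, Finset.sum_congr rfl fun v _ => hval v, Finset.sum_const, Finset.card_univ,
      ← Nat.card_eq_fintype_card, smul_eq_mul, mul_comm]
  have hV : Nat.card G.V = k + 1 := by omega
  obtain ⟨Φ, hΦ, hΦl, hΦι, hΦc⟩ := exists_spanning G hg.2 k hV
  have hΦt : ∀ a, Φ (treeInv a) = G.ι (Φ a) := by
    rintro (i | ⟨x, b⟩)
    · show Φ (.inl i) = _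
      rw [hΦl, G.leg_fix]
    · exact hΦι x b
  have hcl : ∀ h, h ∈ (Set.range Φ)ᶜ → G.ι h ∈ (Set.range Φ)ᶜ := by
    rintro h hh ⟨a, ha⟩
    exact hh ⟨treeInv a, by rw [hΦt, ha, G.ι_invol]⟩
  have hR : Nat.card ((Set.range Φ)ᶜ : Set G.H) = 2 * g := by
    have h1 := Set.ncard_add_ncard_compl (Set.range Φ)
    have h2 : (Set.range Φ).ncard = n + k * 2 := by
      rw [← Set.image_univ, Set.ncard_image_of_injective _ hΦ, Set.ncard_univ]
      simp
    rw [h2] at h1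
    change n + k * 2 + Nat.card ((Set.range Φ)ᶜ : Set G.H) = _ at h1
    omega
  obtain ⟨e, he⟩ := exists_equiv_fin_bool
    (fun h : ((Set.range Φ)ᶜ : Set G.H) => (⟨G.ι h.1, hcl _ h.2⟩ : ((Set.range Φ)ᶜ : Set G.H)))
    (fun h => Subtype.ext (G.ι_invol h.1)) (fun h hh => by
      obtain ⟨i, hi⟩ := G.fix_leg h.1 (congrArg Subtype.val hh)
      exact h.2 ⟨.inl i, (hΦl i).trans hi⟩) g hR
  let Θ : StdH n k g ≃ G.H :=
    (Equiv.sumCongr (Equiv.ofInjective Φ hΦ) e.symm).trans (Equiv.Set.sumCompl (Set.range Φ))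
  have hΘl : ∀ a, Θ (.inl a) = Φ a := fun a => rfl
  have hΘr : ∀ b, Θ (.inr b) = (e.symm b).1 := fun b => rfl
  have hΘι : ∀ h, Θ (stdInv h) = G.ι (Θ h) := by
    rintro (a | b)
    · exact hΦt a
    · obtain ⟨r, rfl⟩ := e.surjective b
      show (e.symm ((e r).1, !(e r).2)).1 = G.ι (e.symm (e r)).1
      rw [← he, e.symm_apply_apply, e.symm_apply_apply]
  let eV : G.V ≃ Fin (k + 1) := Finite.equivFinOfCardEq hV
  have hcub : Cubic fun h => eV (G.ε (Θ h)) := by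
    intro v
    rw [← hg.1 (eV.symm v)]
    refine Nat.card_congr (Θ.subtypeEquiv fun h => ?_)
    rw [Equiv.eq_symm_apply]
  have hcon : Conn partInv fun h => eV (G.ε (Θ h)) := by
    intro a b
    have key : ∀ a b, EqvGen (fun a b => ∃ x, a = G.ε (Φ (.inr (x, true))) ∧
        b = G.ε (Φ (.inr (x, false)))) a b →
        EqvGen (fun x y => ∃ h : StdH n k g, eV (G.ε (Θ h)) = x ∧ eV (G.ε (Θ (partInv h))) = y)
          (eV a) (eV b) := by
      intro a b h
      induction h with
      | rel a b h => 
        obtain ⟨x, rfl, rfl⟩ := h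
        exact .rel _ _ ⟨.inl (.inr (x, true)), rfl, rfl⟩
      | refl a => exact .refl _
      | symm a b _ ih => exact ih.symm
      | trans a b c _ _ ih1 ih2 => exact ih1.trans _ _ _ ih2
    simpa using key _ _ (hΦc (eV.symm a) (eV.symm b))
  have hι : ∀ h, Θ.symm (G.ι h) = stdInv (Θ.symm h) := fun h => by
    rw [Equiv.symm_apply_eq, hΘι, Equiv.apply_symm_apply]
  have hε : ∀ h, eV (G.ε h) = eV (G.ε (Θ (Θ.symm h))) := fun h => by
    rw [Equiv.apply_symm_apply]
  refine ⟨fun h => eV (G.ε (Θ h)), ⟨hcub, hcon⟩, mkStable_big _ _ _ _ (by omega),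
    stdStable_big hk _ _, Or.inl ⟨eV, Θ.symm, hι, hε, fun i => ?_, fun _ => rfl⟩⟩
  · show Θ.symm (G.leg i) = .inl (.inl i)
    rw [Equiv.symm_apply_eq, hΘl, hΦl]

lemma std_connected {k g : ℕ} (hk : k + 3 = 2 * g + n) {ε ε' : StdH n k g → Fin (k + 1)}
    (hg : Cubic ε ∧ Conn partInv ε) (hg' : Cubic ε' ∧ Conn partInv ε') :
    EqvGen (codimOneRel g n) (stdStable ε hg) (stdStable ε' hg') := by
  refine std_eqvGen hk (tree_connected k (StdH n k g) (Fin (k + 1)) partInv partInv_invol (by simp)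
    (Finset.univ.map ⟨Sum.map Sum.inl id, Sum.map_injective.2
      ⟨Sum.inl_injective, Function.injective_id⟩⟩) ?_ ?_ ε ε' hg hg') hg hg'
  · intro h hh
    obtain ⟨a | b, -, rfl⟩ := Finset.mem_map.1 hh
    · rfl
    · rfl
  · rw [Finset.card_map, Finset.card_univ]
    simp
    omega

end Graphs

end TropConn

theorem stmt_13 (g n : ℕ) (hgn : 1 ≤ 2 * (g : ℤ) - 2 + n)
    (A B : StableWGraph g n) (hA : bigStratum g n A) (hB : bigStratum g n B) :
    Relation.EqvGen (codimOneRel g n) A B := by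
  obtain ⟨k, hk⟩ : ∃ k, k + 3 = 2 * g + n := ⟨2 * g + n - 3, by omega⟩
  obtain ⟨G, hG, hGc, hGr⟩ := TropConn.exists_cubic A hA
  obtain ⟨G', hG', hGc', hGr'⟩ := TropConn.exists_cubic B hB
  obtain ⟨ε, hε, hr⟩ := TropConn.exists_std hk G hG hGc
  obtain ⟨ε', hε', hr'⟩ := TropConn.exists_std hk G' hG' hGc'
  exact (hGr.trans _ _ _ (.rel _ _ hr)).trans _ _ _ ((TropConn.std_connected hk hε hε').trans _ _ _
    (hGr'.trans _ _ _ (.rel _ _ hr')).symm)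
end
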